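/- arXiv:0806.1645 — 2 statements merged into one kernel-verified Lean document; each statement's English description precedes it below -/
import Mathlib

section
/- For each M ≥ 1 there exist constants h₀ > 0 and C ≥ 1, depending only on n, d and M, such that the following holds. Let U ⊆ ℝⁿ be open, δ ∈ (0,∞], 0 ≤ h ≤ h₀, and let E ∈ GAQ(M, δ, U, h) be a generalized Almgren quasiminimal set of dimension d. If x ∈ E* and 0 < r < δ are such that B(x, 2r) ⊆ U, then C^{−1} r^d ≤ H^d(E ∩ B(x,r)) ≤ C r^d. -/
/-!
The proof deforms `E`, inside a ball, to the `k`-skeleton of a grid of cubes of side comparable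
to `s` (a Federer-Fleming projection) and compares measures by quasiminimality.

The projection is written in one formula (`blendMap`). At unit scale every coordinate is expanded
by a factor `1 / l` about the centre of its cell and truncated to the cell; with `l` the
`(k+1)`-st smallest distance of the coordinates to the cell centres, all but `k` coordinates
land on cell boundaries, so the image lies in the `k`-skeleton. Taking for `l` the maximum of
that distance and of `‖x‖ - ρ - b` makes the map the identity outside a ball. The map is
`C / τ`-Lipschitz where `l ≥ τ`, so in the transition layer the measure of the image is at most
a constant times the integral of `l ^ (-d)` over `E`. As `l` dominates `k + 2` quantities, `l ^ (-d)`
is at most the product of their powers `-d / (k + 2)`, which are separately integrable because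
`d < k + 2`, when the grid translation `a` and the shift `b` of the layer are averaged over the
unit cube; hence some choice of `(a, b)` is good
(`exists_good_translation`). The core where `l = 0` is avoided for suitable `a` as soon as the
`(k+1)`-dimensional measure of `E` is small compared to `s ^ (k + 1)`. Using the best of `N`
disjoint layers, `gaq_layers` bounds the measure of `E` in a ball by the measure of the skeleton,
the error term `h δ ^ d`, and `C M / N` times the measure of `E` in a slightly larger ball.

Lower bound (`gaq_lower`, `k = d - 1`): the skeleton is `H^d`-null, so a small density ratio stays
small when the radius is halved (`gaq_decay`). A small ratio at `(x, r)` thus propagates to all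
small balls centred near `x`, and a set with uniformly small densities is null, contrary to
`x ∈ E*`.

Upper bound (`gaq_upper`, `k = d < n`): here `H^(d+1)(E) = 0` locally, so the core is always
avoidable. Applying `gaq_layers` on meshes `s 2⁻ʲ` and increasing radii, the measure of the
skeletons grows geometrically in `j` and is absorbed if `N` is large (`absorb_geometric`).
The case `d = n` is the volume of the ball, and for `d > n` the set `E*` is empty.
-/

open MeasureTheory Metric Set Filter Bornology
open scoped ENNReal NNReal Topology InnerProductSpace

noncomputable section

/-- `ℝⁿ` as a Euclidean space. -/
abbrev Euc (n : ℕ) : Type := EuclideanSpace ℝ (Fin n)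

/-- The set `W_t = {x ∈ U : φ_t x ≠ x}` associated with a one-parameter family of maps. -/
def defW {n : ℕ} (U : Set (Euc n)) (φ : ℝ → Euc n → Euc n) (t : ℝ) : Set (Euc n) :=
  {x ∈ U | φ t x ≠ x}

/-- The set `Ŵ = ⋃_{t ∈ [0,1]} (W_t ∪ φ_t(W_t))`. -/
def defWhat {n : ℕ} (U : Set (Euc n)) (φ : ℝ → Euc n → Euc n) : Set (Euc n) :=
  ⋃ t ∈ Icc (0:ℝ) 1, (defW U φ t ∪ φ t '' defW U φ t)

/-- An admissible `δ`-deformation in `U`: a one-parameter family `φ_t : U → U`,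
`t ∈ [0,1]`, with `φ_0 = id`, jointly continuous, `φ_1` Lipschitz, and such that
`Ŵ` is relatively compact in `U` with `diam Ŵ < δ`. -/
def IsAdmissibleDef {n : ℕ} (U : Set (Euc n)) (δ : ℝ) (φ : ℝ → Euc n → Euc n) : Prop :=
  (∀ t ∈ Icc (0:ℝ) 1, MapsTo (φ t) U U) ∧
  (∀ x ∈ U, φ 0 x = x) ∧
  ContinuousOn (fun p : ℝ × Euc n => φ p.1 p.2) (Icc (0:ℝ) 1 ×ˢ U) ∧
  (∃ K : ℝ≥0, LipschitzOnWith K (φ 1) U) ∧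
  IsCompact (closure (defWhat U φ)) ∧
  closure (defWhat U φ) ⊆ U ∧
  Metric.diam (defWhat U φ) < δ

/-- `E ∈ GAQ(M, δ₀, U, h)`: `E` is a generalized Almgren quasiminimal set of dimension
`d` in `U`, with quasiminimality constant `M`, diameter bound `δ₀ ∈ (0,∞]` and error
constant `h`: `E` is closed in `U`, has locally finite `H^d`-measure, and
`H^d(E ∩ W₁) ≤ M H^d(φ₁(E ∩ W₁)) + h δ^d` for every `δ ≤ δ₀` and every admissible
`δ`-deformation `{φ_t}` in `U`. -/
def GAQ (n d : ℕ) (M : ℝ) (δ₀ : ℝ≥0∞) (U : Set (Euc n)) (h : ℝ) (E : Set (Euc n)) :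
    Prop :=
  E ⊆ U ∧ closure E ∩ U ⊆ E ∧
  (∀ (x : Euc n) (r : ℝ), closedBall x r ⊆ U → μH[(d:ℝ)] (E ∩ closedBall x r) < ⊤) ∧
  ∀ δ : ℝ, 0 < δ → ENNReal.ofReal δ ≤ δ₀ →
    ∀ φ : ℝ → Euc n → Euc n, IsAdmissibleDef U δ φ →
      μH[(d:ℝ)] (E ∩ defW U φ 1) ≤
        ENNReal.ofReal M * μH[(d:ℝ)] (φ 1 '' (E ∩ defW U φ 1)) +
          ENNReal.ofReal (h * δ ^ d)

/-! ### The one-dimensional squashing map -/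

/-- Truncation of a real number to `[-1, 1]`. -/
def clampOne (c : ℝ) : ℝ := max (-1) (min 1 c)

/-- Half of the even integer nearest to `t`. -/
def cellIdx (t : ℝ) : ℤ := round (t / 2)

/-- The signed offset of `t` from the nearest even integer; it lies in `[-1, 1]`. -/
def cellOff (t : ℝ) : ℝ := t - 2 * cellIdx t

/-- The distance from `t` to the even integers. -/
def evenDist (t : ℝ) : ℝ := |cellOff t|

/-- In each cell `[2m - 1, 2m + 1]`, expand by the factor `1 / l` about the centre `2m` and
truncate to the cell. For `l = 1` this is the identity, and points at distance at least `l`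
from the even integers are sent to odd integers. -/
def squash (t l : ℝ) : ℝ := 2 * cellIdx t + clampOne (cellOff t / l)

lemma abs_cellOff_le (t : ℝ) : |cellOff t| ≤ 1 := by
  have h := abs_sub_round (t / 2)
  unfold cellOff cellIdx
  rw [abs_le] at *
  constructor <;> linarith [h.1, h.2]

lemma evenDist_nonneg (t : ℝ) : 0 ≤ evenDist t := abs_nonneg _

lemma evenDist_le_one (t : ℝ) : evenDist t ≤ 1 := abs_cellOff_le t

lemma evenDist_le_add (t t' : ℝ) : evenDist t ≤ evenDist t' + |t - t'| := by
  have h := round_le (t / 2) (cellIdx t')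
  have h1 : evenDist t ≤ |t - 2 * cellIdx t'| := by
    have e1 : evenDist t = 2 * |t / 2 - round (t / 2)| := by
      unfold evenDist cellOff cellIdx
      rw [← abs_two (α := ℝ), ← abs_mul, abs_two]; congr 1; ring
    have e2 : |t - 2 * cellIdx t'| = 2 * |t / 2 - cellIdx t'| := by
      rw [← abs_two (α := ℝ), ← abs_mul, abs_two]; congr 1; ring
    rw [e1, e2]; linarith
  have h2 : |t - 2 * cellIdx t'| ≤ |t' - 2 * cellIdx t'| + |t - t'| := by
    calc |t - 2 * cellIdx t'| = |(t' - 2 * cellIdx t') + (t - t')| := by congr 1; ring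
      _ ≤ _ := abs_add_le _ _
  exact h1.trans h2

lemma clampOne_mem (c : ℝ) : -1 ≤ clampOne c ∧ clampOne c ≤ 1 := by
  unfold clampOne; constructor
  · exact le_max_left _ _
  · exact max_le (by norm_num) (min_le_left _ _)

lemma clampOne_sub_le {c c' : ℝ} (h : c ≤ c') : clampOne c' - clampOne c ≤ c' - c := by
  unfold clampOne
  rcases max_cases (-1) (min 1 c) with h1 | h1 <;> rcases max_cases (-1) (min 1 c') with h2 | h2 <;>
  rcases min_cases 1 c with h3 | h3 <;> rcases min_cases 1 c' with h4 | h4 <;> linarith [h1.1, h1.2]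

lemma clampOne_mono {c c' : ℝ} (h : c ≤ c') : clampOne c ≤ clampOne c' :=
  max_le_max le_rfl (min_le_min le_rfl h)

lemma clampOne_of_mem {c : ℝ} (h : |c| ≤ 1) : clampOne c = c := by
  rw [abs_le] at h
  unfold clampOne; rw [min_eq_right h.2, max_eq_right h.1]

lemma squash_one (t : ℝ) : squash t 1 = t := by
  unfold squash; rw [div_one, clampOne_of_mem (abs_cellOff_le t)]; unfold cellOff; ring

lemma abs_squash_sub_le (t l : ℝ) : |squash t l - t| ≤ 2 := by
  have h1 := abs_le.1 (abs_cellOff_le t)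
  have h2 := clampOne_mem (cellOff t / l)
  have : squash t l - t = clampOne (cellOff t / l) - cellOff t := by
    unfold squash cellOff; ring
  rw [this, abs_le]; constructor <;> linarith [h1.1, h1.2, h2.1, h2.2]

lemma squash_odd {t l : ℝ} (hl : 0 < l) (h : l ≤ evenDist t) :
    ∃ m : ℤ, squash t l = 2 * m + 1 := by
  unfold evenDist at h
  unfold squash
  rcases le_abs.1 h with h | h
  · refine ⟨cellIdx t, ?_⟩
    have : 1 ≤ cellOff t / l := by rwa [le_div_iff₀ hl, one_mul]
    unfold clampOne
    rw [min_eq_left this]; norm_num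
  · refine ⟨cellIdx t - 1, ?_⟩
    have : cellOff t / l ≤ -1 := by rw [div_le_iff₀ hl]; linarith
    unfold clampOne
    rw [min_eq_right (by linarith), max_eq_left this]; push_cast; ring

lemma one_sub_clampOne_le {u l : ℝ} (hl : 0 < l) (hl1 : l ≤ 1) (hu : u ≤ 1) :
    1 - clampOne (u / l) ≤ (1 - u) / l := by
  have h1 : 1 ≤ 1 / l := by rw [le_div_iff₀ hl]; linarith
  have h2 : (1 - u) / l = 1 / l - u / l := by ring
  have h3 : 0 ≤ (1 - u) / l := div_nonneg (by linarith) hl.le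
  unfold clampOne
  rcases le_total 1 (u / l) with h | h
  · rw [min_eq_left h]; norm_num; exact h3
  · rw [min_eq_right h]
    have := le_max_right (-1) (u / l)
    linarith

lemma clampOne_neg (c : ℝ) : clampOne (-c) = - clampOne c := by
  unfold clampOne
  rcases max_cases (-1) (min 1 c) with h1 | h1 <;> rcases max_cases (-1) (min 1 (-c)) with h2 | h2 <;>
  rcases min_cases 1 c with h3 | h3 <;> rcases min_cases 1 (-c) with h4 | h4 <;>
  linarith [h1.1, h1.2, h2.1, h2.2, h3.1, h3.2, h4.1, h4.2]

lemma one_add_clampOne_le {u l : ℝ} (hl : 0 < l) (hl1 : l ≤ 1) (hu : -1 ≤ u) :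
    1 + clampOne (u / l) ≤ (1 + u) / l := by
  have := one_sub_clampOne_le (u := -u) hl hl1 (by linarith)
  rw [neg_div, clampOne_neg] at this
  linarith [this, (by ring : (1 - -u) / l = (1 + u) / l)]

lemma squash_sub_le {t t' l : ℝ} (hl : 0 < l) (hl1 : l ≤ 1) (h : t ≤ t') :
    |squash t' l - squash t l| ≤ (t' - t) / l := by
  have hm : cellIdx t ≤ cellIdx t' := by
    unfold cellIdx; rw [round_eq, round_eq]; exact Int.floor_mono (by linarith)
  have a1 := abs_le.1 (abs_cellOff_le t)
  have a2 := abs_le.1 (abs_cellOff_le t')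
  rcases hm.eq_or_lt with hm | hm
  · have hu : cellOff t ≤ cellOff t' := by unfold cellOff; rw [hm]; linarith
    have hdiv : cellOff t / l ≤ cellOff t' / l := by gcongr
    have e : squash t' l - squash t l = clampOne (cellOff t' / l) - clampOne (cellOff t / l) := by
      unfold squash; rw [hm]; ring
    rw [e, abs_of_nonneg (by linarith [clampOne_mono hdiv])]
    refine (clampOne_sub_le hdiv).trans_eq ?_
    unfold cellOff; rw [hm]; ring
  · have hm' : (cellIdx t : ℝ) + 1 ≤ cellIdx t' := by exact_mod_cast hm
    have b1 := one_sub_clampOne_le hl hl1 a1.2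
    have b2 := one_add_clampOne_le hl hl1 a2.1
    have c1 := clampOne_mem (cellOff t / l)
    have c2 := clampOne_mem (cellOff t' / l)
    have b3 : (2 * cellIdx t' - 2 * cellIdx t - 2 : ℝ) ≤
        (2 * cellIdx t' - 2 * cellIdx t - 2 : ℝ) / l := by
      rw [le_div_iff₀ hl]; nlinarith
    have e : (t' - t) / l = (1 + cellOff t') / l +
        (2 * cellIdx t' - 2 * cellIdx t - 2 : ℝ) / l + (1 - cellOff t) / l := by
      unfold cellOff; ring
    rw [e]; unfold squash
    rw [abs_of_nonneg (by linarith)]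
    linarith

lemma clampOne_div_sub {u l l' : ℝ} (hl : 0 < l) (h : l ≤ l') :
    |clampOne (u / l) - clampOne (u / l')| ≤ (l' - l) / l := by
  wlog hu : 0 ≤ u generalizing u
  · have := this (u := -u) (by linarith)
    rw [neg_div, neg_div, clampOne_neg, clampOne_neg] at this
    rw [← abs_neg]; convert this using 2; ring
  have hl' : 0 < l' := hl.trans_le h
  have h0 : u / l' ≤ u / l := by gcongr
  have h1 := clampOne_mono h0
  rw [abs_of_nonneg (by linarith)]
  rcases le_total u l with h2 | h2
  · refine (clampOne_sub_le h0).trans ?_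
    have : u / l - u / l' = (u / l') * ((l' - l) / l) := by field_simp
    rw [this]
    have h3 : u / l' ≤ 1 := by rw [div_le_one hl']; linarith
    have h4 : 0 ≤ (l' - l) / l := div_nonneg (by linarith) hl.le
    nlinarith
  · rcases le_total l' u with h3 | h3
    · have : 1 ≤ u / l' := by rwa [le_div_iff₀ hl', one_mul]
      have h5 : clampOne (u / l') = 1 := by unfold clampOne; rw [min_eq_left this]; norm_num
      have h4 : 0 ≤ (l' - l) / l := div_nonneg (by linarith) hl.le
      linarith [(clampOne_mem (u / l)).2]
    · have h5 : clampOne (u / l') = u / l' := by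
        apply clampOne_of_mem
        rw [abs_of_nonneg (by positivity)]
        exact (div_le_one hl').2 h3
      have h6 : 1 - u / l' ≤ (l' - l) / l := by
        have : 1 - u / l' = (l' - u) / l' := by field_simp
        rw [this]
        exact div_le_div₀ (by linarith) (by linarith) hl h
      linarith [(clampOne_mem (u / l)).2]

/-- The squashing map is Lipschitz in both variables, with a constant inversely proportional
to the lower bound `τ` on the scaling parameters. -/
lemma abs_squash_sub_squash_le {t t' l l' τ : ℝ} (hτ : 0 < τ) (h1 : τ ≤ l) (h2 : τ ≤ l')
    (h3 : l ≤ 1) :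
    |squash t l - squash t' l'| ≤ (|t - t'| + |l - l'|) / τ := by
  have A : |squash t l - squash t' l| ≤ |t - t'| / τ := by
    have hl : 0 < l := hτ.trans_le h1
    rcases le_total t t' with h | h
    · rw [abs_sub_comm, abs_sub_comm t t', abs_of_nonneg (by linarith : 0 ≤ t' - t)]
      refine (squash_sub_le hl h3 h).trans ?_
      exact div_le_div_of_nonneg_left (by linarith) hτ h1
    · rw [abs_of_nonneg (by linarith : 0 ≤ t - t')]
      refine (squash_sub_le hl h3 h).trans ?_
      exact div_le_div_of_nonneg_left (by linarith) hτ h1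
  have B : |squash t' l - squash t' l'| ≤ |l - l'| / τ := by
    have e : squash t' l - squash t' l' =
      clampOne (cellOff t' / l) - clampOne (cellOff t' / l') := by unfold squash; ring
    rw [e]
    rcases le_total l l' with h | h
    · rw [abs_sub_comm l l', abs_of_nonneg (by linarith : 0 ≤ l' - l)]
      refine (clampOne_div_sub (hτ.trans_le h1) h).trans ?_
      exact div_le_div_of_nonneg_left (by linarith) hτ h1
    · rw [abs_of_nonneg (by linarith : 0 ≤ l - l'), abs_sub_comm]
      refine (clampOne_div_sub (hτ.trans_le h2) h).trans ?_
      exact div_le_div_of_nonneg_left (by linarith) hτ h2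
  calc |squash t l - squash t' l'| ≤ |squash t l - squash t' l| + |squash t' l - squash t' l'| := by
        have := abs_add_le (squash t l - squash t' l) (squash t' l - squash t' l')
        simpa using this
    _ ≤ |t - t'| / τ + |l - l'| / τ := add_le_add A B
    _ = _ := by ring

/-! ### Averaging negative powers of distances -/

/-- The uniform probability measure on `[0, 1]`. -/
abbrev unitVol : Measure ℝ := volume.restrict (Icc (0:ℝ) 1)

instance : IsProbabilityMeasure unitVol :=
  ⟨by rw [Measure.restrict_apply_univ, Real.volume_Icc]; norm_num⟩

/-- The power `|t| ^ (-β)` with values in `[0, ∞]`; it is infinite at `t = 0` if `β > 0`. -/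
def negPow (β t : ℝ) : ℝ≥0∞ := ENNReal.ofReal |t| ^ (-β)

lemma measurable_negPow (β : ℝ) : Measurable (negPow β) := by
  unfold negPow
  fun_prop

lemma negPow_anti {β s t : ℝ} (hβ : 0 ≤ β) (h : |s| ≤ |t|) : negPow β t ≤ negPow β s := by
  unfold negPow
  rw [ENNReal.rpow_neg, ENNReal.rpow_neg, ENNReal.inv_le_inv]
  exact ENNReal.rpow_le_rpow (ENNReal.ofReal_le_ofReal h) hβ

lemma lintegral_negPow_Icc {β : ℝ} (hβ : β < 1) :
    ∫⁻ y in Icc (-1:ℝ) 1, negPow β y < ∞ := by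
  have h1 : ∫⁻ y in Icc (0:ℝ) 1, negPow β y < ∞ := by
    have hi : IntervalIntegrable (fun x : ℝ => x ^ (-β)) volume 0 1 :=
      intervalIntegral.intervalIntegrable_rpow' (by linarith)
    rw [intervalIntegrable_iff_integrableOn_Ioc_of_le zero_le_one] at hi
    have h2 := hi.2
    rw [hasFiniteIntegral_iff_ofReal] at h2
    · rw [setLIntegral_congr Ioc_ae_eq_Icc.symm]
      refine lt_of_le_of_lt (le_of_eq ?_) h2
      refine setLIntegral_congr_fun measurableSet_Ioc fun x hx => ?_
      unfold negPow
      rw [abs_of_pos hx.1, ENNReal.ofReal_rpow_of_pos hx.1]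
    · filter_upwards [ae_restrict_mem measurableSet_Ioc] with x hx
      exact Real.rpow_nonneg hx.1.le _
  have h3 : ∫⁻ y in Icc (-1:ℝ) 0, negPow β y = ∫⁻ y in Icc (0:ℝ) 1, negPow β y := by
    rw [← lintegral_indicator measurableSet_Icc, ← lintegral_indicator measurableSet_Icc,
      ← lintegral_neg_eq_self]
    congr 1 with y
    by_cases hy : y ∈ Icc (0:ℝ) 1
    · rw [indicator_of_mem hy, indicator_of_mem (by simpa [and_comm] using hy)]
      simp [negPow]
    · rw [indicator_of_notMem hy, indicator_of_notMem]
      intro h; apply hy; simpa [and_comm] using h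
  rw [← Icc_union_Icc_eq_Icc (by norm_num : (-1:ℝ) ≤ 0) zero_le_one]
  refine (lintegral_union_le _ _ _).trans_lt ?_
  rw [h3]; exact ENNReal.add_lt_top.2 ⟨h1, h1⟩

lemma exists_lintegral_negPow_le {β : ℝ} (hβ0 : 0 ≤ β) (hβ : β < 1) :
    ∃ I : ℝ≥0∞, I ≠ ∞ ∧ ∀ c : ℝ, ∫⁻ a, negPow β (c - a) ∂unitVol ≤ I := by
  refine ⟨1 + ∫⁻ y in Icc (-1:ℝ) 1, negPow β y,
    ENNReal.add_ne_top.2 ⟨by simp, (lintegral_negPow_Icc hβ).ne⟩, fun c => ?_⟩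
  have hpt : ∀ y : ℝ, negPow β y ≤ 1 + (Icc (-1:ℝ) 1).indicator (negPow β) y := by
    intro y
    by_cases hy : y ∈ Icc (-1:ℝ) 1
    · rw [indicator_of_mem hy]; exact le_add_self
    · have hy1 : |(1:ℝ)| ≤ |y| := by
        by_contra hc; apply hy
        push Not at hc
        rw [abs_one, abs_lt] at hc; exact ⟨hc.1.le, hc.2.le⟩
      refine (negPow_anti hβ0 hy1).trans ?_
      simp [negPow]
  calc ∫⁻ a, negPow β (c - a) ∂unitVol
      ≤ ∫⁻ a, (1 + (Icc (-1:ℝ) 1).indicator (negPow β) (c - a)) ∂unitVol :=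
        lintegral_mono fun a => hpt _
    _ = 1 + ∫⁻ a, (Icc (-1:ℝ) 1).indicator (negPow β) (c - a) ∂unitVol := by
        rw [lintegral_add_left measurable_const]; simp
    _ ≤ 1 + ∫⁻ a, (Icc (-1:ℝ) 1).indicator (negPow β) (c - a) := by
        gcongr; exact Measure.restrict_le_self
    _ = _ := by
        rw [lintegral_sub_left_eq_self (fun y => (Icc (-1:ℝ) 1).indicator (negPow β) y) c,
          lintegral_indicator measurableSet_Icc]

lemma measurable_evenDist : Measurable evenDist := by
  have : LipschitzWith 1 evenDist := LipschitzWith.of_le_add fun x y => by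
    rw [Real.dist_eq]; exact evenDist_le_add x y
  exact this.continuous.measurable

lemma exists_lintegral_negPow_evenDist_le {β : ℝ} (hβ0 : 0 ≤ β) (hβ : β < 1) :
    ∃ I : ℝ≥0∞, I ≠ ∞ ∧ ∀ t : ℝ, ∫⁻ a, negPow β (evenDist (t - a)) ∂unitVol ≤ I := by
  obtain ⟨I, hI, h⟩ := exists_lintegral_negPow_le hβ0 hβ
  refine ⟨I + I + I, by simp [hI], fun t => ?_⟩
  -- For `a ∈ [0, 1]`, the nearest even integer to `t - a` is one of three fixed integers.
  have hpt : ∀ a ∈ Icc (0:ℝ) 1, negPow β (evenDist (t - a)) ≤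
      negPow β ((t - 2 * (cellIdx t - 1)) - a) + negPow β ((t - 2 * cellIdx t) - a) +
        negPow β ((t - 2 * (cellIdx t + 1)) - a) := by
    intro a ha
    have e : negPow β (evenDist (t - a)) = negPow β (t - 2 * cellIdx (t - a) - a) := by
      unfold negPow evenDist cellOff; rw [abs_abs]; congr 3; ring
    have b1 := abs_le.1 (abs_cellOff_le t)
    have b2 := abs_le.1 (abs_cellOff_le (t - a))
    unfold cellOff at b1 b2
    have c1 : cellIdx (t - a) < cellIdx t + 2 := by
      have : (cellIdx (t - a) : ℝ) < cellIdx t + 2 := by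
        linarith [b1.1, b1.2, b2.1, b2.2, ha.1, ha.2]
      exact_mod_cast this
    have c2 : cellIdx t - 2 < cellIdx (t - a) := by
      have : (cellIdx t : ℝ) - 2 < cellIdx (t - a) := by
        linarith [b1.1, b1.2, b2.1, b2.2, ha.1, ha.2]
      exact_mod_cast this
    have c3 : cellIdx (t - a) = cellIdx t - 1 ∨ cellIdx (t - a) = cellIdx t ∨
        cellIdx (t - a) = cellIdx t + 1 := by lia
    rw [e]
    rcases c3 with c | c | c <;> rw [c] <;> push_cast
    · exact le_add_right (le_add_right le_rfl)
    · exact le_add_right (le_add_left le_rfl)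
    · exact le_add_left le_rfl
  have hm : ∀ c : ℝ, Measurable fun a => negPow β (c - a) := fun c =>
    (measurable_negPow β).comp (measurable_const.sub measurable_id)
  calc ∫⁻ a, negPow β (evenDist (t - a)) ∂unitVol
      ≤ ∫⁻ a, (negPow β ((t - 2 * (cellIdx t - 1)) - a) + negPow β ((t - 2 * cellIdx t) - a) +
        negPow β ((t - 2 * (cellIdx t + 1)) - a)) ∂unitVol :=
        setLIntegral_mono' measurableSet_Icc hpt
    _ ≤ I + I + I := by
        rw [lintegral_add_right _ (hm _), lintegral_add_right _ (hm _)]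
        gcongr <;> exact h _

/-! ### Hausdorff measure of images under maps with varying Lipschitz constant -/

/-- If `f` is `C / t`-Lipschitz where `Λ ≥ t`, for every `t > 0`, then `H^d (f(Z))` is controlled
by the integral of `Λ ^ (-d)` over `Z`. -/
lemma hausdorffMeasure_image_le_lintegral {X Y : Type*} [MetricSpace X] [MeasurableSpace X]
    [BorelSpace X] [MetricSpace Y] [MeasurableSpace Y] [BorelSpace Y] {f : X → Y} {Λ : X → ℝ}
    {Z : Set X} {d : ℝ} (hd : 0 ≤ d) (C : ℝ≥0) (hΛ : Measurable Λ) (hZ : MeasurableSet Z)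
    (hpos : ∀ x ∈ Z, 0 < Λ x ∧ Λ x ≤ 1)
    (hlip : ∀ t : ℝ≥0, 0 < t → LipschitzOnWith (C / t) f {x ∈ Z | (t:ℝ) ≤ Λ x}) :
    μH[d] (f '' Z) ≤ (2 * C : ℝ≥0∞) ^ d * ∫⁻ x in Z, negPow d (Λ x) ∂μH[d] := by
  let D : ℕ → Set X := fun j => {x ∈ Z | (1/2:ℝ)^(j+1) < Λ x ∧ Λ x ≤ (1/2:ℝ)^j}
  have hDm : ∀ j, MeasurableSet (D j) := fun j =>
    hZ.inter ((measurableSet_lt measurable_const hΛ).inter (measurableSet_le hΛ measurable_const))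
  have hU : Z = ⋃ j, D j := by
    ext x; simp only [D, mem_iUnion, mem_ofPred_eq]
    constructor
    · intro hx
      obtain ⟨j, hj⟩ := exists_nat_pow_near_of_lt_one (hpos x hx).1 (hpos x hx).2
        (by norm_num : (0:ℝ) < 1/2) (by norm_num)
      exact ⟨j, hx, hj.1, hj.2⟩
    · rintro ⟨j, hx, _⟩; exact hx
  have hdisj : Pairwise (Function.onFun Disjoint D) := by
    have key : ∀ i j, i < j → Disjoint (D i) (D j) := by
      intro i j hij
      rw [Set.disjoint_left]
      rintro x ⟨_, h1, _⟩ ⟨_, _, h2⟩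
      have : (1/2:ℝ)^j ≤ (1/2:ℝ)^(i+1) :=
        pow_le_pow_of_le_one (by norm_num) (by norm_num) hij
      linarith
    intro i j hij
    rcases lt_or_gt_of_ne hij with h | h
    · exact key i j h
    · exact (key j i h).symm
  have hj : ∀ j, μH[d] (f '' D j) ≤
      (2 * C : ℝ≥0∞) ^ d * ∫⁻ x in D j, negPow d (Λ x) ∂μH[d] := by
    intro j
    set t : ℝ≥0 := (1/2)^(j+1) with ht
    have htpos : 0 < t := by positivity
    have htr : (t:ℝ) = (1/2:ℝ)^(j+1) := by rw [ht]; push_cast; rfl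
    have hl : LipschitzOnWith (C / t) f (D j) := (hlip t htpos).mono fun x hx =>
      ⟨hx.1, by rw [htr]; exact hx.2.1.le⟩
    refine (hl.hausdorffMeasure_image_le hd).trans ?_
    have hlow : ∀ x ∈ D j, ((2 * t : ℝ≥0) : ℝ≥0∞) ^ (-d) ≤ negPow d (Λ x) := by
      intro x hx
      have : negPow d ((2 * t : ℝ≥0) : ℝ) ≤ negPow d (Λ x) := by
        apply negPow_anti hd
        rw [abs_of_pos (hpos x hx.1).1, NNReal.abs_eq]
        refine hx.2.2.trans_eq ?_
        push_cast; rw [htr, pow_succ]; ring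
      refine le_trans (le_of_eq ?_) this
      unfold negPow
      rw [NNReal.abs_eq, ENNReal.ofReal_coe_nnreal]
    have : ((2 * t : ℝ≥0) : ℝ≥0∞) ^ (-d) * μH[d] (D j) ≤ ∫⁻ x in D j, negPow d (Λ x) ∂μH[d] := by
      rw [← setLIntegral_const]
      exact setLIntegral_mono' (hDm j) hlow
    refine le_trans (le_of_eq ?_) (mul_le_mul_right this _)
    rw [← mul_assoc]
    congr 1
    rw [ENNReal.rpow_neg, ← ENNReal.inv_rpow, ← ENNReal.mul_rpow_of_nonneg _ _ hd]
    congr 1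
    rw [ENNReal.coe_div htpos.ne']
    have h2 : (t : ℝ≥0∞) ≠ 0 := by exact_mod_cast htpos.ne'
    push_cast
    rw [ENNReal.mul_inv (by simp) (by simp), div_eq_mul_inv, mul_comm (2:ℝ≥0∞) C, mul_assoc,
      ← mul_assoc (2:ℝ≥0∞), ENNReal.mul_inv_cancel (by simp) (by simp), one_mul]
  calc μH[d] (f '' Z) = μH[d] (⋃ j, f '' D j) := by rw [← image_iUnion, ← hU]
    _ ≤ ∑' j, μH[d] (f '' D j) := measure_iUnion_le _
    _ ≤ ∑' j, (2 * C : ℝ≥0∞) ^ d * ∫⁻ x in D j, negPow d (Λ x) ∂μH[d] := ENNReal.tsum_le_tsum hj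
    _ = (2 * C : ℝ≥0∞) ^ d * ∫⁻ x in Z, negPow d (Λ x) ∂μH[d] := by
        rw [ENNReal.tsum_mul_left]; congr 1
        conv_rhs => rw [hU]
        rw [lintegral_iUnion hDm hdisj]

/-! ### The blended projection to the skeleton -/

/-- The `(k+1)`-st smallest among the distances of the coordinates of `z` to the even integers,
as the least over sets `S` of `k + 1` indices of the largest such distance on `S`. If `k + 1 ≤ n`,
it vanishes exactly when at least `k + 1` coordinates are even integers; otherwise the infimum is
empty and has the value `0`. -/
def coreDist {n : ℕ} (k : ℕ) (z : Fin n → ℝ) : ℝ :=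
  ⨅ S : {S : Finset (Fin n) // S.card = k + 1}, ‖fun i : S.1 => evenDist (z i)‖

lemma coreDist_bdd {n : ℕ} (k : ℕ) (z : Fin n → ℝ) : BddBelow (range
    fun S : {S : Finset (Fin n) // S.card = k + 1} => ‖fun i : S.1 => evenDist (z i)‖) :=
  (Set.finite_range _).bddBelow

lemma coreDist_nonneg {n : ℕ} (k : ℕ) (z : Fin n → ℝ) : 0 ≤ coreDist k z :=
  Real.iInf_nonneg fun _ => norm_nonneg _

lemma coreDist_le {n k : ℕ} {z : Fin n → ℝ} {S : Finset (Fin n)} (hS : S.card = k + 1) {c : ℝ}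
    (hc : 0 ≤ c) (h : ∀ i ∈ S, evenDist (z i) ≤ c) : coreDist k z ≤ c := by
  refine (ciInf_le (coreDist_bdd k z) ⟨S, hS⟩).trans ?_
  rw [pi_norm_le_iff_of_nonneg hc]
  intro i
  rw [Real.norm_of_nonneg (evenDist_nonneg _)]
  exact h i i.2

lemma exists_coreDist {n k : ℕ} (hk : k + 1 ≤ n) (z : Fin n → ℝ) :
    ∃ S : Finset (Fin n), S.card = k + 1 ∧ ∀ i ∈ S, evenDist (z i) ≤ coreDist k z := by
  obtain ⟨S0, -, hS0⟩ := Finset.exists_subset_card_eq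
    (s := (Finset.univ : Finset (Fin n))) (n := k + 1) (by simpa using hk)
  have : Nonempty {S : Finset (Fin n) // S.card = k + 1} := ⟨⟨S0, hS0⟩⟩
  obtain ⟨S, hS⟩ := exists_eq_ciInf_of_finite
    (f := fun S : {S : Finset (Fin n) // S.card = k + 1} => ‖fun i : S.1 => evenDist (z i)‖)
  refine ⟨S.1, S.2, fun i hi => ?_⟩
  have := norm_le_pi_norm (fun i : S.1 => evenDist (z i)) ⟨i, hi⟩
  rw [Real.norm_of_nonneg (evenDist_nonneg _)] at this
  exact this.trans_eq hS

lemma coreDist_le_one {n k : ℕ} (hk : k + 1 ≤ n) (z : Fin n → ℝ) : coreDist k z ≤ 1 := by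
  obtain ⟨S, hS, -⟩ := exists_coreDist hk z
  exact coreDist_le hS zero_le_one fun i _ => evenDist_le_one _

lemma coreDist_le_add {n k : ℕ} (hk : k + 1 ≤ n) {z w : Fin n → ℝ} {c : ℝ} (hc : 0 ≤ c)
    (h : ∀ i, |z i - w i| ≤ c) : coreDist k z ≤ coreDist k w + c := by
  obtain ⟨S, hS, h2⟩ := exists_coreDist hk w
  refine coreDist_le hS (add_nonneg (coreDist_nonneg _ _) hc) fun i hi => ?_
  exact (evenDist_le_add _ (w i)).trans (add_le_add (h2 i hi) (h i))

/-- All but `k` of the coordinates are at distance at least `coreDist k z` from the even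
integers. -/
lemma exists_coreDist_le {n k : ℕ} (hk : k + 1 ≤ n) (z : Fin n → ℝ) :
    ∃ S : Finset (Fin n), S.card = k ∧ ∀ i ∉ S, coreDist k z ≤ evenDist (z i) := by
  classical
  let B : Finset (Fin n) := Finset.univ.filter fun i => evenDist (z i) < coreDist k z
  have hB : B.card ≤ k := by
    by_contra hc
    push Not at hc
    obtain ⟨S, hSB, hS⟩ := Finset.exists_subset_card_eq (s := B) (n := k + 1) hc
    have hlt : ∀ i ∈ S, evenDist (z i) < coreDist k z := fun i hi =>
      (Finset.mem_filter.1 (hSB hi)).2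
    have hSne : S.Nonempty := Finset.card_pos.1 (by lia)
    obtain ⟨i, hi⟩ := hSne
    have hpos : 0 < coreDist k z := (evenDist_nonneg _).trans_lt (hlt i hi)
    have : ‖fun i : S => evenDist (z i)‖ < coreDist k z := by
      rw [pi_norm_lt_iff hpos]
      intro i
      rw [Real.norm_of_nonneg (evenDist_nonneg _)]
      exact hlt i i.2
    exact absurd (ciInf_le (coreDist_bdd k z) ⟨S, hS⟩) (not_le.2 this)
  obtain ⟨S, hBS, -, hS⟩ := Finset.exists_subsuperset_card_eq (Finset.subset_univ B) hB
    (by simpa using Nat.le_of_succ_le hk)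
  refine ⟨S, hS, fun i hi => ?_⟩
  by_contra hc
  exact hi (hBS (Finset.mem_filter.2 ⟨Finset.mem_univ _, not_le.1 hc⟩))

lemma norm_le_of_coord_le {n : ℕ} {z : Euc n} {c : ℝ} (hc : 0 ≤ c) (h : ∀ i, |z i| ≤ c) :
    ‖z‖ ≤ n * c := by
  rw [EuclideanSpace.norm_eq]
  refine Real.sqrt_le_iff.2 ⟨by positivity, ?_⟩
  calc ∑ i, ‖z i‖ ^ 2 ≤ ∑ _i : Fin n, c ^ 2 := by
        refine Finset.sum_le_sum fun i _ => ?_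
        exact pow_le_pow_left₀ (norm_nonneg _) (h i) 2
    _ = n * c ^ 2 := by simp
    _ ≤ (n * c) ^ 2 := by
        rw [mul_pow]
        refine mul_le_mul_of_nonneg_right ?_ (by positivity)
        exact_mod_cast Nat.le_self_pow two_ne_zero n

lemma abs_coord_le {n : ℕ} (z : Euc n) (i : Fin n) : |z i| ≤ ‖z‖ := PiLp.norm_apply_le z i

/-- The scaling parameter of the blended projection (used with `k + 1 ≤ n` and `η ≤ 1`): it is `1`
for `‖x‖ ≥ ρ + b + 1`, and for
`‖x‖ ≤ ρ + b` it is the distance to the core of the dual skeleton, truncated below at `η`. -/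
def blendScale {n : ℕ} (k : ℕ) (a : Fin n → ℝ) (ρ b η : ℝ) (x : Euc n) : ℝ :=
  max (max (coreDist k fun i => x i - a i) (min 1 (‖x‖ - ρ - b))) η

/-- The blended projection: every coordinate is squashed towards the odd translates of `a` with
the parameter `blendScale`. It is the identity far out and a projection to the `k`-skeleton
of the grid further in. -/
def blendMap {n : ℕ} (k : ℕ) (a : Fin n → ℝ) (ρ b η : ℝ) (x : Euc n) : Euc n :=
  WithLp.toLp 2 fun i => a i + squash (x i - a i) (blendScale k a ρ b η x)

/-- The `k`-skeleton of the grid of cubes of side `2` centred at the points of `a + 2ℤⁿ`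
(with the `k`-dimensional faces extended to full affine planes). -/
def skel {n : ℕ} (k : ℕ) (a : Fin n → ℝ) : Set (Euc n) :=
  {y | ∃ S : Finset (Fin n), S.card = k ∧ ∀ i ∉ S, ∃ m : ℤ, y i = a i + (2 * m + 1)}

section blend
variable {n k : ℕ} {a : Fin n → ℝ} {ρ b η : ℝ}

lemma blendScale_le_one (hk : k + 1 ≤ n) (hη : η ≤ 1) (x : Euc n) :
    blendScale k a ρ b η x ≤ 1 :=
  max_le (max_le (coreDist_le_one hk _) (min_le_left _ _)) hη

lemma blendScale_le_add (hk : k + 1 ≤ n) (x y : Euc n) :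
    blendScale k a ρ b η x ≤ blendScale k a ρ b η y + ‖x - y‖ := by
  unfold blendScale
  have h0 := norm_nonneg (x - y)
  refine max_le (max_le ?_ ?_) ?_
  · refine (coreDist_le_add hk (w := fun i => y i - a i) h0 fun i => ?_).trans ?_
    · have := abs_coord_le (x - y) i
      simpa using this
    · gcongr; exact (le_max_left _ _).trans (le_max_left _ _)
  · have : min 1 (‖x‖ - ρ - b) ≤ min 1 (‖y‖ - ρ - b) + ‖x - y‖ := by
      rw [← min_add_add_right]
      refine min_le_min (by linarith) ?_
      linarith [norm_sub_norm_le x y]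
    refine this.trans ?_
    gcongr; exact (le_max_right _ _).trans (le_max_left _ _)
  · have : η ≤ max (max (coreDist k fun i => y i - a i) (min 1 (‖y‖ - ρ - b))) η := le_max_right _ _
    linarith

lemma continuous_blendScale (hk : k + 1 ≤ n) : Continuous (blendScale k a ρ b η) := by
  refine (LipschitzWith.of_le_add (f := blendScale k a ρ b η) fun x y => ?_).continuous
  rw [dist_eq_norm]; exact blendScale_le_add hk x y

lemma blendMap_lipschitzOn (hk : k + 1 ≤ n) (hη : η ≤ 1) {τ : ℝ≥0} (hτ : 0 < τ) :
    LipschitzOnWith (2 * n / τ) (blendMap k a ρ b η) {x | (τ:ℝ) ≤ blendScale k a ρ b η x} := by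
  refine LipschitzOnWith.of_dist_le_mul fun x hx y hy => ?_
  have hτ' : (0:ℝ) < τ := hτ
  rw [dist_eq_norm, dist_eq_norm]
  have h1 : |blendScale k a ρ b η x - blendScale k a ρ b η y| ≤ ‖x - y‖ := by
    rw [abs_le]
    have h1 := blendScale_le_add (a := a) (ρ := ρ) (b := b) (η := η) hk x y
    have h2 := blendScale_le_add (a := a) (ρ := ρ) (b := b) (η := η) hk y x
    rw [norm_sub_rev] at h2
    constructor <;> linarith
  have h2 : ‖blendMap k a ρ b η x - blendMap k a ρ b η y‖ ≤ n * (2 * ‖x - y‖ / τ) := by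
    refine norm_le_of_coord_le (by positivity) fun i => ?_
    have e : (blendMap k a ρ b η x - blendMap k a ρ b η y) i =
        squash (x i - a i) (blendScale k a ρ b η x) - squash (y i - a i) (blendScale k a ρ b η y) := by
      simp [blendMap]
    rw [e]
    refine (abs_squash_sub_squash_le hτ' hx hy (blendScale_le_one hk hη x)).trans ?_
    gcongr
    have h3 := abs_coord_le (x - y) i
    have h4 : |x i - a i - (y i - a i)| ≤ ‖x - y‖ := by simpa using h3
    linarith
  refine h2.trans_eq ?_
  push_cast; ring

lemma blendMap_lipschitz (hk : k + 1 ≤ n) (hη0 : 0 < η) (hη : η ≤ 1) :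
    ∃ K : ℝ≥0, LipschitzWith K (blendMap k a ρ b η) := by
  refine ⟨2 * n / ⟨η, hη0.le⟩, ?_⟩
  rw [← lipschitzOnWith_univ]
  refine (blendMap_lipschitzOn hk hη (τ := ⟨η, hη0.le⟩) hη0).mono fun x _ => ?_
  change η ≤ max _ η
  exact le_max_right _ _

lemma blendMap_eq_self (hk : k + 1 ≤ n) (hη : η ≤ 1) {x : Euc n} (hx : 1 ≤ ‖x‖ - ρ - b) :
    blendMap k a ρ b η x = x := by
  have h1 : blendScale k a ρ b η x = 1 := by
    refine le_antisymm (blendScale_le_one hk hη x) ?_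
    refine le_trans ?_ ((le_max_right _ _).trans (le_max_left _ _))
    rw [min_eq_left hx]
  ext i
  simp [blendMap, h1, squash_one]

lemma norm_blendMap_sub_le (x : Euc n) : ‖blendMap k a ρ b η x - x‖ ≤ 2 * n := by
  rw [mul_comm]
  refine norm_le_of_coord_le zero_le_two fun i => ?_
  have := abs_squash_sub_le (x i - a i) (blendScale k a ρ b η x)
  have e : (blendMap k a ρ b η x - x) i =
      squash (x i - a i) (blendScale k a ρ b η x) - (x i - a i) := by
    simp [blendMap]; ring
  rw [e]; exact this

lemma blendMap_mem_skel (hk : k + 1 ≤ n) (hη0 : 0 < η) {x : Euc n} (hx : ‖x‖ - ρ - b ≤ 0)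
    (h : η ≤ coreDist k fun i => x i - a i) : blendMap k a ρ b η x ∈ skel k a := by
  have e : blendScale k a ρ b η x = coreDist k fun i => x i - a i := by
    unfold blendScale
    rw [max_eq_left (a := coreDist k fun i => x i - a i), max_eq_left h]
    exact (min_le_right _ _).trans (hx.trans (hη0.le.trans h))
  obtain ⟨S, hS, h2⟩ := exists_coreDist_le hk fun i => x i - a i
  refine ⟨S, hS, fun i hi => ?_⟩
  obtain ⟨m, hm⟩ := squash_odd (hη0.trans_le h) (h2 i hi)
  refine ⟨m, ?_⟩
  simp [blendMap, e, hm]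

end blend

/-! ### Admissible translations of the grid -/

/-- The uniform distribution of the translation parameter in the unit cube. -/
def cubeVol (n : ℕ) : Measure (Fin n → ℝ) := Measure.pi fun _ => unitVol

instance (n : ℕ) : IsProbabilityMeasure (cubeVol n) := by
  unfold cubeVol; infer_instance

lemma cubeVol_eq_restrict (ι : Type*) [Fintype ι] :
    (Measure.pi fun _ : ι => unitVol) =
      (volume : Measure (ι → ℝ)).restrict (Set.pi univ fun _ => Icc 0 1) := by
  unfold unitVol
  rw [volume_pi, Measure.restrict_pi_pi]

lemma exists_int_of_evenDist_eq_zero {t : ℝ} (h : evenDist t = 0) : ∃ m : ℤ, t = 2 * m := by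
  refine ⟨cellIdx t, ?_⟩
  have := abs_eq_zero.1 h
  unfold cellOff at this
  linarith

/-- A set `P` is met by `a + 2ℤ^ι` for a set of `a ∈ [0,1]^ι` of measure at most the volume of
`P`. -/
lemma measure_translates_le {ι : Type*} [Fintype ι] (P : Set (ι → ℝ)) :
    (Measure.pi fun _ : ι => unitVol) {a | ∃ y ∈ P, ∀ i, ∃ m : ℤ, y i - a i = 2 * m} ≤
      volume P := by
  classical
  rw [cubeVol_eq_restrict]
  set Q : Set (ι → ℝ) := Set.pi univ fun _ => Icc (0:ℝ) 1 with hQ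
  have hQm : MeasurableSet Q := MeasurableSet.univ_pi fun _ => measurableSet_Icc
  let v : (ι → ℤ) → ι → ℝ := fun m i => 2 * m i
  let T : (ι → ℤ) → Set (ι → ℝ) := fun m => (fun y => y - v m) ⁻¹' Q
  have hTm : ∀ m, MeasurableSet (T m) := fun m => (measurable_id.sub_const _) hQm
  have hdisj : Pairwise (Function.onFun Disjoint T) := by
    intro m m' hne
    rw [Function.onFun, Set.disjoint_left]
    intro y hy hy'
    apply hne
    funext i
    have h1 := hy i (mem_univ i)
    have h2 := hy' i (mem_univ i)
    simp only [v, Pi.sub_apply, mem_Icc] at h1 h2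
    have h3 : (m i : ℝ) < m' i + 1 := by linarith [h1.1, h2.2]
    have h4 : (m' i : ℝ) < m i + 1 := by linarith [h1.2, h2.1]
    have h3' : m i < m' i + 1 := by exact_mod_cast h3
    have h4' : m' i < m i + 1 := by exact_mod_cast h4
    lia
  rw [Measure.restrict_apply' hQm]
  calc volume ({a | ∃ y ∈ P, ∀ i, ∃ m : ℤ, y i - a i = 2 * m} ∩ Q)
      ≤ volume (⋃ m, (fun a => a + v m) ⁻¹' (P ∩ T m)) := by
        refine measure_mono fun a ha => ?_
        obtain ⟨⟨y, hy, hm⟩, haQ⟩ := ha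
        choose m hm using hm
        have e : a + v m = y := by
          funext i; simp only [v, Pi.add_apply]; linarith [hm i]
        refine mem_iUnion.2 ⟨m, ?_⟩
        change a + v m ∈ P ∩ T m
        refine ⟨by rwa [e], ?_⟩
        change a + v m - v m ∈ Q
        rwa [add_sub_cancel_right]
    _ ≤ ∑' m, volume ((fun a => a + v m) ⁻¹' (P ∩ T m)) := measure_iUnion_le _
    _ = ∑' m, volume.restrict P (T m) := by
        congr 1; funext m
        rw [measure_preimage_add_right, Measure.restrict_apply (hTm m), inter_comm]
    _ ≤ volume.restrict P (⋃ m, T m) :=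
        tsum_meas_le_meas_iUnion_of_disjoint _ hTm hdisj
    _ ≤ volume P := by
        refine (measure_mono (subset_univ _)).trans ?_
        rw [Measure.restrict_apply_univ]

lemma lipschitzWith_coords {n : ℕ} (S : Finset (Fin n)) :
    LipschitzWith 1 fun (x : Euc n) (i : S) => x i := by
  refine LipschitzWith.of_dist_le_mul fun x y => ?_
  rw [NNReal.coe_one, one_mul, dist_pi_le_iff dist_nonneg]
  intro i
  rw [dist_eq_norm, dist_eq_norm]
  exact PiLp.norm_apply_le (x - y) i

/-- Projecting `K` to the coordinates in `S` does not increase its `(k+1)`-dimensional measure,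
which bounds the measure of the translations whose dual planes in the directions outside `S`
meet `K`. -/
lemma measure_bad_translations_le {n k : ℕ} (K : Set (Euc n)) {S : Finset (Fin n)}
    (hS : S.card = k + 1) :
    cubeVol n {a : Fin n → ℝ | ∃ x ∈ K, ∀ i ∈ S, evenDist (x i - a i) = 0} ≤
      μH[((k + 1 : ℕ) : ℝ)] K := by
  classical
  let P : Set (S → ℝ) := (fun (x : Euc n) (i : S) => x i) '' K
  let B : Set (S → ℝ) := {a | ∃ y ∈ P, ∀ i, ∃ m : ℤ, y i - a i = 2 * m}
  have hmp := measurePreserving_piEquivPiSubtypeProd (fun _ : Fin n => unitVol) (fun i => i ∈ S)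
  have h1 : {a : Fin n → ℝ | ∃ x ∈ K, ∀ i ∈ S, evenDist (x i - a i) = 0} ⊆
      (MeasurableEquiv.piEquivPiSubtypeProd (fun _ : Fin n => ℝ) (fun i => i ∈ S)) ⁻¹'
        (B ×ˢ univ) := by
    rintro a ⟨x, hx, h⟩
    refine ⟨⟨_, ⟨x, hx, rfl⟩, fun i => ?_⟩, mem_univ _⟩
    exact exists_int_of_evenDist_eq_zero (h i i.2)
  refine (measure_mono h1).trans ?_
  unfold cubeVol
  rw [hmp.measure_preimage_equiv, Measure.prod_prod, measure_univ, mul_one]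
  refine (le_of_eq_of_le (by congr!) (measure_translates_le P)).trans ?_
  rw [← hausdorffMeasure_pi_real]
  have h2 := (lipschitzWith_coords S).hausdorffMeasure_image_le
    (d := ((k + 1 : ℕ) : ℝ)) (by positivity) K
  simp only [ENNReal.coe_one, ENNReal.one_rpow, one_mul] at h2
  have e : (Fintype.card S : ℝ) = ((k + 1 : ℕ) : ℝ) := by rw [Fintype.card_coe, hS]
  rw [e]
  exact h2

/-- Sum of `measure_bad_translations_le` over the sets `S` of `k + 1` indices. -/
lemma measure_core_translations_le {n k : ℕ} (hk : k + 1 ≤ n) (K : Set (Euc n)) :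
    cubeVol n {a : Fin n → ℝ | ∃ x ∈ K, coreDist k (fun i => x i - a i) = 0} ≤
      2 ^ n * μH[((k + 1 : ℕ) : ℝ)] K := by
  classical
  have h1 : {a : Fin n → ℝ | ∃ x ∈ K, coreDist k (fun i => x i - a i) = 0} ⊆
      ⋃ S ∈ (Finset.univ : Finset (Fin n)).powersetCard (k + 1),
        {a : Fin n → ℝ | ∃ x ∈ K, ∀ i ∈ S, evenDist (x i - a i) = 0} := by
    rintro a ⟨x, hx, h⟩
    obtain ⟨S, hS, h2⟩ := exists_coreDist hk fun i => x i - a i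
    refine mem_biUnion (x := S) (Finset.mem_coe.2 (Finset.mem_powersetCard.2
      ⟨Finset.subset_univ _, hS⟩)) ⟨x, hx, fun i hi => ?_⟩
    exact le_antisymm ((h2 i hi).trans_eq h) (evenDist_nonneg _)
  calc _ ≤ _ := measure_mono h1
    _ ≤ ∑ S ∈ (Finset.univ : Finset (Fin n)).powersetCard (k + 1),
        cubeVol n {a : Fin n → ℝ | ∃ x ∈ K, ∀ i ∈ S, evenDist (x i - a i) = 0} :=
          measure_biUnion_finset_le _ _
    _ ≤ ∑ S ∈ (Finset.univ : Finset (Fin n)).powersetCard (k + 1),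
        μH[((k + 1 : ℕ) : ℝ)] K := Finset.sum_le_sum fun S hS =>
          measure_bad_translations_le K (Finset.mem_powersetCard.1 hS).2
    _ ≤ 2 ^ n * μH[((k + 1 : ℕ) : ℝ)] K := by
        rw [Finset.sum_const, nsmul_eq_mul, Finset.card_powersetCard, Finset.card_univ,
          Fintype.card_fin]
        gcongr
        exact_mod_cast Nat.choose_le_two_pow n (k + 1)

/-! ### Averaging over the translations -/

/-- A sum of products of singular kernels that dominates the `d`-th power of the Lipschitz
constant of the blended projection in the transition layer (with `β = d / (k + 2)`), while each
factor has a bounded average. -/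
def singKernel {n : ℕ} (k : ℕ) (β ρ : ℝ) (x : Euc n) (p : (Fin n → ℝ) × ℝ) : ℝ≥0∞ :=
  ∑ S ∈ (Finset.univ : Finset (Fin n)).powersetCard (k + 1),
    (∏ i ∈ S, negPow β (evenDist (x i - p.1 i))) * negPow β (‖x‖ - ρ - p.2)

lemma measurable_singKernel {n : ℕ} (k : ℕ) (β ρ : ℝ) :
    Measurable (Function.uncurry (singKernel (n := n) k β ρ)) := by
  unfold singKernel Function.uncurry
  have h1 := measurable_negPow β
  have h2 := measurable_evenDist
  have h3 : ∀ i : Fin n, Measurable fun x : Euc n => x i := fun i => by fun_prop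
  refine Finset.measurable_fun_sum _ fun S _ => Measurable.mul ?_ ?_
  · refine Finset.measurable_fun_prod _ fun i _ => ?_
    refine h1.comp (h2.comp (Measurable.sub ((h3 i).comp measurable_fst) ?_))
    exact (measurable_pi_apply i).comp (measurable_fst.comp measurable_snd)
  · refine h1.comp ?_
    fun_prop

lemma exists_lintegral_singKernel_le (n k : ℕ) {β : ℝ} (hβ0 : 0 ≤ β) (hβ : β < 1) :
    ∃ C : ℝ≥0∞, C ≠ ∞ ∧ ∀ (ρ : ℝ) (x : Euc n),
      ∫⁻ p, singKernel k β ρ x p ∂((cubeVol n).prod unitVol) ≤ C := by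
  obtain ⟨I, hI, hI2⟩ := exists_lintegral_negPow_le hβ0 hβ
  obtain ⟨J, hJ, hJ2⟩ := exists_lintegral_negPow_evenDist_le hβ0 hβ
  refine ⟨∑ S ∈ (Finset.univ : Finset (Fin n)).powersetCard (k + 1), (∏ i ∈ S, J) * I, ?_, ?_⟩
  · refine ENNReal.sum_ne_top.2 fun S _ => ENNReal.mul_ne_top ?_ hI
    exact ENNReal.prod_ne_top fun _ _ => hJ
  intro ρ x
  unfold singKernel
  have hm : ∀ i : Fin n, Measurable fun t : ℝ => negPow β (evenDist (x i - t)) := fun i =>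
    (measurable_negPow β).comp (measurable_evenDist.comp (by fun_prop))
  have hm2 : Measurable fun b : ℝ => negPow β (‖x‖ - ρ - b) :=
    (measurable_negPow β).comp (by fun_prop)
  have hm3 : ∀ i : Fin n, Measurable fun a : Fin n → ℝ => negPow β (evenDist (x i - a i)) :=
    fun i => (hm i).comp (measurable_pi_apply i)
  rw [lintegral_finsetSum]
  swap
  · intro S _
    exact ((Finset.measurable_fun_prod S fun i _ => hm3 i).comp measurable_fst).mul
      (hm2.comp measurable_snd)
  refine Finset.sum_le_sum fun S _ => ?_
  rw [lintegral_prod_mul (f := fun a : Fin n → ℝ => ∏ i ∈ S, negPow β (evenDist (x i - a i)))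
    (Finset.measurable_fun_prod S fun i _ => hm3 i).aemeasurable hm2.aemeasurable]
  gcongr
  · unfold cubeVol
    rw [ProbabilityTheory.lintegral_prod_eq_prod_lintegral_of_indepFun S
      (fun i (a : Fin n → ℝ) => negPow β (evenDist (x i - a i)))
      (ProbabilityTheory.iIndepFun_pi fun i => (hm i).aemeasurable) hm3]
    refine Finset.prod_le_prod' fun i _ => ?_
    rw [(measurePreserving_eval (fun _ : Fin n => unitVol) i).lintegral_comp (hm i)]
    exact hJ2 _
  · exact hI2 _

/-- The scaling parameter is at least the maximum of `k + 2` quantities (the distances of `k + 1`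
coordinates to the even integers, and `‖x‖ - ρ - b`), so its power `-d` is at most the product
of their powers `-d / (k + 2)`. -/
lemma negPow_blendScale_le {n k : ℕ} (hk : k + 1 ≤ n) {d : ℕ} {a : Fin n → ℝ} {ρ b η : ℝ}
    {x : Euc n} (h0 : 0 < ‖x‖ - ρ - b) (h1 : ‖x‖ - ρ - b < 1) :
    negPow d (blendScale k a ρ b η x) ≤ singKernel k (d / (k + 2)) ρ x (a, b) := by
  obtain ⟨S, hS, h⟩ := exists_coreDist hk fun i => x i - a i
  set β : ℝ := d / (k + 2) with hβ
  have hβ0 : 0 ≤ β := by positivity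
  set l := blendScale k a ρ b η x with hl
  have hl1 : ‖x‖ - ρ - b ≤ l := by
    rw [hl, blendScale, min_eq_right h1.le]
    exact (le_max_right _ _).trans (le_max_left _ _)
  have hl0 : 0 < l := h0.trans_le hl1
  have hl2 : ∀ i ∈ S, evenDist (x i - a i) ≤ l := fun i hi =>
    (h i hi).trans ((le_max_left _ _).trans (le_max_left _ _))
  have e : negPow d l = (∏ _i ∈ S, negPow β l) * negPow β l := by
    rw [Finset.prod_const, hS, ← pow_succ]
    unfold negPow
    rw [← ENNReal.rpow_natCast, ← ENNReal.rpow_mul]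
    congr 1
    rw [hβ]; push_cast; field_simp; ring
  rw [e]
  unfold singKernel
  refine le_trans ?_ (Finset.single_le_sum
    (f := fun S : Finset (Fin n) => (∏ i ∈ S, negPow β (evenDist (x i - a i))) *
      negPow β (‖x‖ - ρ - b)) (fun _ _ => zero_le)
    (Finset.mem_powersetCard.2 ⟨Finset.subset_univ S, hS⟩))
  refine mul_le_mul' (Finset.prod_le_prod' fun i hi => negPow_anti hβ0 ?_) (negPow_anti hβ0 ?_)
  · rw [abs_of_nonneg (evenDist_nonneg _), abs_of_pos hl0]; exact hl2 i hi
  · rw [abs_of_pos h0, abs_of_pos hl0]; exact hl1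

/-- By averaging, some translation of the grid and some position of the transition layer keep the
core of the dual skeleton off `K` and make the integral of the singular kernel comparable to
the total mass. -/
lemma exists_good_translation {n k : ℕ} (hk : k + 1 ≤ n) {β : ℝ} (hβ0 : 0 ≤ β) (hβ : β < 1) :
    ∃ C : ℝ≥0∞, C ≠ ∞ ∧ ∀ (ρ : ℝ) (μ : Measure (Euc n)) [IsFiniteMeasure μ] (K : Set (Euc n)),
      2 ^ n * μH[((k + 1 : ℕ) : ℝ)] K ≤ 1 / 4 →
      ∃ (a : Fin n → ℝ) (b : ℝ), (∀ i, a i ∈ Icc (0:ℝ) 1) ∧ b ∈ Icc (0:ℝ) 1 ∧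
        (∀ x ∈ K, coreDist k (fun i => x i - a i) ≠ 0) ∧
        ∫⁻ x, singKernel k β ρ x (a, b) ∂μ ≤ C * μ univ := by
  obtain ⟨C, hC, hC2⟩ := exists_lintegral_singKernel_le n k hβ0 hβ
  refine ⟨4 * (C + 1), by finiteness, fun ρ μ _ K hK => ?_⟩
  set P := (cubeVol n).prod unitVol with hP
  let B1 : Set ((Fin n → ℝ) × ℝ) :=
    {a : Fin n → ℝ | ∃ x ∈ K, coreDist k (fun i => x i - a i) = 0} ×ˢ univ
  let B2 : Set ((Fin n → ℝ) × ℝ) :=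
    {p | 4 * (C + 1) * μ univ < ∫⁻ x, singKernel k β ρ x p ∂μ}
  let B3 : Set ((Fin n → ℝ) × ℝ) := ((Set.pi univ fun _ => Icc (0:ℝ) 1) ×ˢ Icc (0:ℝ) 1)ᶜ
  have h1 : P B1 ≤ 1 / 4 := by
    rw [hP, Measure.prod_prod, measure_univ, mul_one]
    exact (measure_core_translations_le hk K).trans hK
  have h3 : P B3 = 0 := by
    rw [prob_compl_eq_zero_iff ((MeasurableSet.univ_pi fun _ => measurableSet_Icc).prod
      measurableSet_Icc), hP, Measure.prod_prod]
    unfold cubeVol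
    rw [Measure.pi_pi]
    simp [unitVol]
  have h2 : P B2 ≤ 1 / 4 := by
    by_cases h0 : μ univ = 0
    · have : B2 = ∅ := by
        ext p
        simp [B2, Measure.measure_univ_eq_zero.1 h0]
      rw [this]; simp
    have hmeas : Measurable fun p : (Fin n → ℝ) × ℝ => ∫⁻ x, singKernel k β ρ x p ∂μ :=
      (measurable_singKernel k β ρ).lintegral_prod_left'
    have hintle : ∫⁻ p, ∫⁻ x, singKernel k β ρ x p ∂μ ∂P ≤ C * μ univ := by
      rw [← lintegral_lintegral_swap (measurable_singKernel k β ρ).aemeasurable]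
      calc _ ≤ ∫⁻ _x, C ∂μ := lintegral_mono fun x => hC2 ρ x
        _ = C * μ univ := lintegral_const _
    have hne : 4 * (C + 1) * μ univ ≠ 0 := by simp [h0]
    have hnt : 4 * (C + 1) * μ univ ≠ ∞ := by finiteness
    calc P B2 ≤ P {p | 4 * (C + 1) * μ univ ≤ ∫⁻ x, singKernel k β ρ x p ∂μ} :=
          measure_mono fun p hp => mem_ofPred.2 (mem_ofPred.1 hp).le
      _ ≤ (∫⁻ p, ∫⁻ x, singKernel k β ρ x p ∂μ ∂P) / (4 * (C + 1) * μ univ) :=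
          meas_ge_le_lintegral_div hmeas.aemeasurable hne hnt
      _ ≤ 1 / 4 := by
          refine ENNReal.div_le_of_le_mul (hintle.trans ?_)
          have : (1 / 4 : ℝ≥0∞) * (4 * (C + 1) * μ univ) = (C + 1) * μ univ := by
            rw [mul_assoc, ← mul_assoc, one_div, ENNReal.inv_mul_cancel (by simp) (by simp),
              one_mul]
          rw [this]
          gcongr
          exact le_self_add
  have hlt : P (B1 ∪ B2 ∪ B3) < 1 := by
    calc P (B1 ∪ B2 ∪ B3) ≤ P B1 + P B2 + P B3 :=
          (measure_union_le _ _).trans (by gcongr; exact measure_union_le _ _)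
      _ ≤ 1 / 4 + 1 / 4 + 0 := by gcongr; exact h3.le
      _ = ENNReal.ofReal (1 / 2) := by
          rw [show (1 / 4 : ℝ≥0∞) = ENNReal.ofReal (1 / 4) by
            rw [ENNReal.ofReal_div_of_pos (by norm_num)]; simp, add_zero,
            ← ENNReal.ofReal_add (by norm_num) (by norm_num)]
          norm_num
      _ < 1 := by rw [ENNReal.ofReal_lt_one]; norm_num
  have hne : (B1 ∪ B2 ∪ B3) ≠ univ := by
    intro h
    rw [h, measure_univ] at hlt
    exact lt_irrefl _ hlt
  obtain ⟨⟨a, b⟩, hab⟩ := (Set.ne_univ_iff_exists_notMem _).1 hne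
  simp only [mem_union, not_or] at hab
  obtain ⟨⟨hb1, hb2⟩, hb3⟩ := hab
  have hb3' := not_not.1 hb3
  refine ⟨a, b, fun i => hb3'.1 i (mem_univ i), hb3'.2, fun x hx h => hb1 ⟨⟨x, hx, h⟩, mem_univ _⟩,
    not_lt.1 hb2⟩

/-! ### The deformation at unit scale -/

/-- The deformation lemma at unit scale. The map pushes `K ∩ {‖x‖ ≤ ρ}` to the `k`-skeleton of
a grid and is the identity for `‖x‖ ≥ ρ + 2`; all the points of `K` that are moved either land
on the skeleton or belong to a part `Z` of the transition layer, whose image has controlled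
measure. -/
lemma exists_unit_deformation {n k d : ℕ} (hk : k + 1 ≤ n) (hdk : d ≤ k + 1) :
    ∃ C : ℝ≥0∞, C ≠ ∞ ∧ ∀ (ρ : ℝ) (K : Set (Euc n)), IsCompact K → μH[(d:ℝ)] K ≠ ∞ →
      2 ^ n * μH[((k + 1 : ℕ) : ℝ)] K ≤ 1 / 4 →
      ∃ (a : Fin n → ℝ) (f : Euc n → Euc n) (Z : Set (Euc n)), (∀ i, a i ∈ Icc (0:ℝ) 1) ∧
        (∃ L : ℝ≥0, LipschitzWith L f) ∧ (∀ x, ρ + 2 ≤ ‖x‖ → f x = x) ∧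
        (∀ x, ‖f x - x‖ ≤ 2 * n) ∧ (∀ x ∈ K, ‖x‖ ≤ ρ → f x ∈ skel k a) ∧
        (∀ x ∈ K, f x ≠ x → f x ∈ skel k a ∨ x ∈ Z) ∧
        μH[(d:ℝ)] (f '' Z) ≤ C * μH[(d:ℝ)] (K ∩ {x | ρ < ‖x‖ ∧ ‖x‖ < ρ + 2}) := by
  have hβ0 : (0:ℝ) ≤ d / (k + 2) := by positivity
  have hβ : (d:ℝ) / (k + 2) < 1 := by
    rw [div_lt_one (by positivity)]
    have : (d:ℝ) ≤ k + 1 := by exact_mod_cast hdk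
    linarith
  obtain ⟨C, hC, hC2⟩ := exists_good_translation hk hβ0 hβ
  refine ⟨(2 * ((2 * n : ℝ≥0) : ℝ≥0∞)) ^ (d:ℝ) * C, by finiteness, fun ρ K hK hKd hKk => ?_⟩
  set A : Set (Euc n) := {x | ρ < ‖x‖ ∧ ‖x‖ < ρ + 2} with hA
  have hAm : MeasurableSet A :=
    (measurableSet_lt measurable_const measurable_norm).inter
      (measurableSet_lt measurable_norm measurable_const)
  have hfin : IsFiniteMeasure ((μH[(d:ℝ)] : Measure (Euc n)).restrict (K ∩ A)) :=
    ⟨by rw [Measure.restrict_apply_univ]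
        exact (measure_mono inter_subset_left).trans_lt (lt_top_iff_ne_top.2 hKd)⟩
  obtain ⟨a, b, ha, hb, hcore, hintle⟩ := hC2 ρ ((μH[(d:ℝ)] : Measure (Euc n)).restrict (K ∩ A)) K hKk
  rw [Measure.restrict_apply_univ] at hintle
  -- by compactness, `K` stays at a positive distance from the core
  obtain ⟨η, hη0, hη1, hη⟩ : ∃ η : ℝ, 0 < η ∧ η ≤ 1 ∧
      ∀ x ∈ K, η ≤ coreDist k fun i => x i - a i := by
    rcases K.eq_empty_or_nonempty with h | h
    · exact ⟨1, one_pos, le_rfl, by simp [h]⟩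
    have hcont : Continuous fun x : Euc n => coreDist k fun i => x i - a i := by
      refine (LipschitzWith.of_le_add fun x y => ?_).continuous
      refine coreDist_le_add hk dist_nonneg fun i => ?_
      rw [dist_eq_norm]
      simpa using abs_coord_le (x - y) i
    obtain ⟨x0, hx0, hmin⟩ := hK.exists_isMinOn h hcont.continuousOn
    exact ⟨_, lt_of_le_of_ne (coreDist_nonneg _ _) (hcore x0 hx0).symm, coreDist_le_one hk _,
      fun x hx => hmin hx⟩
  let Z : Set (Euc n) := K ∩ {x | 0 < ‖x‖ - ρ - b ∧ ‖x‖ - ρ - b < 1}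
  have hm : Measurable fun x : Euc n => ‖x‖ - ρ - b := by fun_prop
  have hZm : MeasurableSet Z := hK.measurableSet.inter
    ((measurableSet_lt measurable_const hm).inter (measurableSet_lt hm measurable_const))
  have hZA : Z ⊆ K ∩ A := by
    rintro x ⟨hx, h1, h2⟩
    exact ⟨hx, by linarith [hb.1], by linarith [hb.2]⟩
  refine ⟨a, blendMap k a ρ b η, Z, ha, blendMap_lipschitz hk hη0 hη1, fun x hx => ?_,
    norm_blendMap_sub_le, fun x hxK hx => ?_, fun x hxK hx => ?_, ?_⟩
  · exact blendMap_eq_self hk hη1 (by linarith [hb.2])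
  · exact blendMap_mem_skel hk hη0 (by linarith [hb.1]) (hη x hxK)
  · rcases le_or_gt (‖x‖ - ρ - b) 0 with h1 | h1
    · exact Or.inl (blendMap_mem_skel hk hη0 h1 (hη x hxK))
    · refine Or.inr ⟨hxK, h1, ?_⟩
      by_contra h2
      exact hx (blendMap_eq_self hk hη1 (not_lt.1 h2))
  · have h1 := hausdorffMeasure_image_le_lintegral (f := blendMap k a ρ b η)
      (Λ := blendScale k a ρ b η) (Z := Z) (d := d) (by positivity) (2 * n : ℝ≥0)
      (continuous_blendScale hk).measurable hZm
      (fun x hx => ⟨hη0.trans_le (le_max_right _ _), blendScale_le_one hk hη1 x⟩)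
      (fun t ht => (blendMap_lipschitzOn hk hη1 ht).mono fun x hx => hx.2)
    refine h1.trans ?_
    rw [mul_assoc]
    gcongr
    calc ∫⁻ x in Z, negPow d (blendScale k a ρ b η x) ∂μH[(d:ℝ)]
        ≤ ∫⁻ x in Z, singKernel k (d / (k + 2)) ρ x (a, b) ∂μH[(d:ℝ)] :=
          setLIntegral_mono' hZm fun x hx => negPow_blendScale_le hk hx.2.1 hx.2.2
      _ ≤ ∫⁻ x in K ∩ A, singKernel k (d / (k + 2)) ρ x (a, b) ∂μH[(d:ℝ)] :=
          lintegral_mono_set hZA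
      _ ≤ _ := hintle

/-! ### The measure of the skeleton -/

lemma hausdorffMeasure_flat_le {n k : ℕ} {S : Finset (Fin n)} (hS : S.card = k) (c : Fin n → ℝ)
    {R : ℝ} (hR : 0 ≤ R) :
    μH[(k:ℝ)] {y : Euc n | (∀ i ∉ S, y i = c i) ∧ ‖y‖ ≤ R} ≤
      (n:ℝ≥0∞) ^ k * ENNReal.ofReal (2 * R) ^ k := by
  classical
  let e : (S → ℝ) → Euc n := fun z => WithLp.toLp 2 fun i => if h : i ∈ S then z ⟨i, h⟩ else c i
  have he : LipschitzWith n e := by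
    refine LipschitzWith.of_dist_le_mul fun z w => ?_
    rw [dist_eq_norm]
    refine norm_le_of_coord_le dist_nonneg fun i => ?_
    by_cases h : i ∈ S
    · simpa [e, h, Real.dist_eq] using dist_le_pi_dist z w ⟨i, h⟩
    · simp [e, h]
  have hsub : {y : Euc n | (∀ i ∉ S, y i = c i) ∧ ‖y‖ ≤ R} ⊆ e '' closedBall 0 R := by
    rintro y ⟨h1, h2⟩
    refine ⟨fun i => y i, ?_, ?_⟩
    · rw [mem_closedBall_zero_iff, pi_norm_le_iff_of_nonneg hR]
      exact fun i => (abs_coord_le y i).trans h2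
    · ext i
      by_cases h : i ∈ S
      · simp [e, h]
      · simp [e, h, h1 i h]
  refine (measure_mono hsub).trans ((he.hausdorffMeasure_image_le (by positivity) _).trans ?_)
  have e1 : (k:ℝ) = (Fintype.card S : ℝ) := by rw [Fintype.card_coe, hS]
  rw [e1, hausdorffMeasure_pi_real, Real.volume_pi_closedBall _ hR, Fintype.card_coe, hS,
    ENNReal.ofReal_pow (by positivity)]
  simp

lemma hausdorffMeasure_skel_le {n k : ℕ} {a : Fin n → ℝ} (ha : ∀ i, a i ∈ Icc (0:ℝ) 1) {R : ℝ}
    (hR : 0 ≤ R) :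
    μH[(k:ℝ)] (skel k a ∩ closedBall 0 R) ≤
      (2 ^ n * 7 ^ n * n ^ k * 2 ^ k : ℝ≥0∞) * ENNReal.ofReal (1 + R) ^ (n + k) := by
  classical
  let N : ℤ := ⌊R⌋ + 2
  have hN0 : 0 ≤ N := by have := Int.floor_nonneg.2 hR; lia
  let F : Finset (Fin n → ℤ) := Fintype.piFinset fun _ => Finset.Icc (-N) N
  have hsub : skel k a ∩ closedBall 0 R ⊆
      ⋃ S ∈ (Finset.univ : Finset (Fin n)).powersetCard k, ⋃ m ∈ F,
        {y : Euc n | (∀ i ∉ S, y i = a i + (2 * m i + 1)) ∧ ‖y‖ ≤ R} := by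
    rintro y ⟨⟨S, hS, h⟩, hy⟩
    have hy' : ‖y‖ ≤ R := mem_closedBall_zero_iff.1 hy
    choose! m hm using h
    refine mem_biUnion (x := S) (Finset.mem_coe.2 (Finset.mem_powersetCard.2
      ⟨Finset.subset_univ _, hS⟩)) ?_
    refine mem_biUnion (x := fun i => if i ∈ S then 0 else m i) ?_ ?_
    · refine Finset.mem_coe.2 (Fintype.mem_piFinset.2 fun i => ?_)
      by_cases hi : i ∈ S
      · simpa [hi] using hN0
      · have h1 := abs_le.1 ((abs_coord_le y i).trans hy')
        rw [hm i hi] at h1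
        have h2 := ha i
        have h3 := Int.lt_floor_add_one R
        have h4 : (-N : ℝ) < m i + 1 := by
          simp only [N]; push_cast
          linarith [h1.1, h2.2]
        have h5 : (m i : ℝ) < N + 1 := by
          simp only [N]; push_cast
          linarith [h1.2, h2.1]
        have h4' : -N < m i + 1 := by exact_mod_cast h4
        have h5' : m i < N + 1 := by exact_mod_cast h5
        simp only [hi, if_false, Finset.mem_Icc]
        constructor <;> lia
    · refine ⟨fun i hi => ?_, hy'⟩
      simp [hi, hm i hi]
  have hcard : (F.card : ℝ≥0∞) ≤ (7 * ENNReal.ofReal (1 + R)) ^ n := by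
    have : F.card = (2 * N + 1).toNat ^ n := by
      simp only [F, Fintype.card_piFinset, Finset.prod_const, Finset.card_univ, Fintype.card_fin,
        Int.card_Icc]
      congr 2; ring
    rw [this]
    push_cast
    gcongr
    have h7 : (7:ℝ≥0∞) = ENNReal.ofReal 7 := by simp
    rw [h7, ← ENNReal.ofReal_mul (by norm_num), ← ENNReal.ofReal_natCast]
    refine ENNReal.ofReal_le_ofReal ?_
    have h8 : (((2 * N + 1).toNat : ℤ) : ℝ) = 2 * N + 1 := by
      rw [Int.toNat_of_nonneg (by lia)]; push_cast; ring
    rw [Int.cast_natCast] at h8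
    rw [h8]
    simp only [N]; push_cast
    linarith [Int.floor_le R]
  calc μH[(k:ℝ)] (skel k a ∩ closedBall 0 R)
      ≤ ∑ S ∈ (Finset.univ : Finset (Fin n)).powersetCard k, ∑ m ∈ F,
        μH[(k:ℝ)] {y : Euc n | (∀ i ∉ S, y i = a i + (2 * m i + 1)) ∧ ‖y‖ ≤ R} :=
        (measure_mono hsub).trans ((measure_biUnion_finset_le _ _).trans
          (Finset.sum_le_sum fun S _ => measure_biUnion_finset_le _ _))
    _ ≤ ∑ S ∈ (Finset.univ : Finset (Fin n)).powersetCard k, ∑ m ∈ F,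
        (n:ℝ≥0∞) ^ k * ENNReal.ofReal (2 * R) ^ k :=
        Finset.sum_le_sum fun S hS => Finset.sum_le_sum fun m _ =>
          hausdorffMeasure_flat_le (Finset.mem_powersetCard.1 hS).2 _ hR
    _ = (n.choose k : ℝ≥0∞) * (F.card * ((n:ℝ≥0∞) ^ k * ENNReal.ofReal (2 * R) ^ k)) := by
        simp [Finset.sum_const, Finset.card_powersetCard]
    _ ≤ 2 ^ n * ((7 * ENNReal.ofReal (1 + R)) ^ n *
          ((n:ℝ≥0∞) ^ k * (2 * ENNReal.ofReal (1 + R)) ^ k)) := by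
        gcongr
        · exact_mod_cast Nat.choose_le_two_pow n k
        · rw [ENNReal.ofReal_mul zero_le_two]
          simp only [ENNReal.ofReal_ofNat]
          gcongr
          linarith
    _ = _ := by ring

/-- The `k`-skeleton has finite `k`-dimensional measure in balls, hence is null in higher
dimension. -/
lemma hausdorffMeasure_skel_eq_zero {n k d : ℕ} (hkd : k < d) {a : Fin n → ℝ}
    (ha : ∀ i, a i ∈ Icc (0:ℝ) 1) {R : ℝ} (hR : 0 ≤ R) :
    μH[(d:ℝ)] (skel k a ∩ closedBall 0 R) = 0 := by
  rcases Measure.hausdorffMeasure_zero_or_top (show (k:ℝ) < d by exact_mod_cast hkd)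
    (skel k a ∩ closedBall 0 R) with h | h
  · exact h
  · exfalso
    have h2 := hausdorffMeasure_skel_le (k := k) ha hR
    rw [h] at h2
    refine absurd h2 (not_le.2 (lt_top_iff_ne_top.2 ?_))
    finiteness

/-! ### Applying the quasiminimality -/

/-- A Lipschitz map preserving a closed ball of `U` and fixing the points outside it is
the final map of an admissible deformation, by linear interpolation with the identity. -/
lemma gaq_apply {n d : ℕ} {M : ℝ} {δ₀ : ℝ≥0∞} {U : Set (Euc n)} {h : ℝ} {E : Set (Euc n)}
    (hE : GAQ n d M δ₀ U h E) {F : Euc n → Euc n} (hF : ∃ L : ℝ≥0, LipschitzWith L F)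
    {y : Euc n} {R δ : ℝ} (hR : 0 ≤ R) (hB : closedBall y R ⊆ U)
    (hid : ∀ x ∉ closedBall y R, F x = x) (hmaps : MapsTo F (closedBall y R) (closedBall y R))
    (hδ : 2 * R < δ) (hδ₀ : ENNReal.ofReal δ ≤ δ₀) :
    μH[(d:ℝ)] (E ∩ {x | F x ≠ x}) ≤
      ENNReal.ofReal M * μH[(d:ℝ)] (F '' (E ∩ {x | F x ≠ x})) + ENNReal.ofReal (h * δ ^ d) := by
  obtain ⟨hEU, -, -, hqm⟩ := hE
  obtain ⟨L, hL⟩ := hF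
  let φ : ℝ → Euc n → Euc n := fun t x => x + t • (F x - x)
  have hφ1 : φ 1 = F := by funext x; simp [φ]
  have hball : ∀ t ∈ Icc (0:ℝ) 1, ∀ x ∈ closedBall y R, φ t x ∈ closedBall y R := by
    intro t ht x hx
    exact (convex_closedBall y R).add_smul_sub_mem hx (hmaps hx) ht
  have hW : ∀ t, defW U φ t ⊆ closedBall y R := by
    rintro t x ⟨-, hx⟩
    by_contra hc
    exact hx (by simp [φ, hid x hc])
  have hWhat : defWhat U φ ⊆ closedBall y R := by
    refine iUnion₂_subset fun t ht => union_subset (hW t) ?_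
    rintro _ ⟨x, hx, rfl⟩
    exact hball t ht x (hW t hx)
  have hcl : closure (defWhat U φ) ⊆ closedBall y R := closure_minimal hWhat isClosed_closedBall
  have hadm : IsAdmissibleDef U δ φ := by
    refine ⟨fun t ht x hx => ?_, fun x _ => by simp [φ], ?_, ⟨L, ?_⟩, ?_, hcl.trans hB, ?_⟩
    · by_cases hc : x ∈ closedBall y R
      · exact hB (hball t ht x hc)
      · simpa [φ, hid x hc] using hx
    · have := hL.continuous
      refine Continuous.continuousOn ?_
      simp only [φ]; fun_prop
    · rw [hφ1]; exact hL.lipschitzOnWith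
    · exact (isCompact_closedBall y R).of_isClosed_subset isClosed_closure hcl
    · exact ((diam_mono hWhat isBounded_closedBall).trans (diam_closedBall hR)).trans_lt hδ
  have h1 := hqm δ (by linarith) hδ₀ φ hadm
  have e : E ∩ defW U φ 1 = E ∩ {x | F x ≠ x} := by
    ext x
    constructor
    · rintro ⟨h1, h2⟩; exact ⟨h1, by rw [← hφ1]; exact h2.2⟩
    · rintro ⟨h1, h2⟩; exact ⟨h1, hEU h1, by rw [hφ1]; exact h2⟩
  rwa [e, hφ1] at h1

open scoped Pointwise in
lemma hausdorffMeasure_scale {n d : ℕ} {s : ℝ} (hs : 0 < s) (y : Euc n) (A : Set (Euc n)) :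
    μH[(d:ℝ)] ((fun z => y + s • z) '' A) = ENNReal.ofReal s ^ d * μH[(d:ℝ)] A := by
  have e : (fun z => y + s • z) '' A = (fun z => y + z) '' (s • A) := by
    rw [← image_smul, image_image]
  rw [e, (isometry_add_left y).hausdorffMeasure_image (Or.inl (by positivity)),
    Measure.hausdorffMeasure_smul₀ (by positivity) hs.ne', ENNReal.smul_def, smul_eq_mul]
  congr 1
  rw [NNReal.rpow_natCast, ENNReal.coe_pow, ← Real.enorm_of_nonneg hs.le]
  rfl

lemma gaq_isCompact {n d : ℕ} {M : ℝ} {δ₀ : ℝ≥0∞} {U : Set (Euc n)} {h : ℝ} {E : Set (Euc n)}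
    (hE : GAQ n d M δ₀ U h E) {y : Euc n} {R : ℝ} (hB : closedBall y R ⊆ U) :
    IsCompact (E ∩ closedBall y R) := by
  have e : E ∩ closedBall y R = closure E ∩ closedBall y R := by
    refine Subset.antisymm (inter_subset_inter_left _ subset_closure) ?_
    rintro x ⟨h1, h2⟩
    exact ⟨hE.2.1 ⟨h1, hB h2⟩, h2⟩
  rw [e]
  exact (isCompact_closedBall y R).inter_left isClosed_closure

/-- The effect of one deformation at scale `s`: the measure of `E` in the ball of radius `ρ s`
is controlled by the measure of the skeleton and the measure of `E` in the transition layer. -/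
lemma gaq_step {n k d : ℕ} (hk : k + 1 ≤ n) (hdk : d ≤ k + 1) :
    ∃ C : ℝ≥0∞, C ≠ ∞ ∧ ∀ {M : ℝ} {δ₀ : ℝ≥0∞} {U : Set (Euc n)} {h : ℝ} {E : Set (Euc n)},
      GAQ n d M δ₀ U h E → ∀ (y : Euc n) {s ρ δ : ℝ} (Sk : ℝ≥0∞), 0 < s → 0 ≤ ρ →
      closedBall y ((ρ + 2 + 2 * n) * s) ⊆ U → 2 * ((ρ + 2 + 2 * n) * s) < δ →
      ENNReal.ofReal δ ≤ δ₀ →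
      2 ^ n * μH[((k + 1 : ℕ) : ℝ)] (E ∩ closedBall y ((ρ + 2) * s)) ≤
        1 / 4 * ENNReal.ofReal s ^ (k + 1) →
      (∀ a : Fin n → ℝ, (∀ i, a i ∈ Icc (0:ℝ) 1) →
        μH[(d:ℝ)] (skel k a ∩ closedBall 0 (ρ + 2 + 2 * n)) ≤ Sk) →
      μH[(d:ℝ)] (E ∩ closedBall y (ρ * s)) ≤
        (ENNReal.ofReal M + 1) * (ENNReal.ofReal s ^ d * Sk) + ENNReal.ofReal (h * δ ^ d) +
        ENNReal.ofReal M * C *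
          μH[(d:ℝ)] (E ∩ {x | ρ * s < dist x y ∧ dist x y < (ρ + 2) * s}) := by
  obtain ⟨C, hC, hC2⟩ := exists_unit_deformation (n := n) (d := d) hk hdk
  refine ⟨C, hC, ?_⟩
  intro M δ₀ U h E hE y s ρ δ Sk hs hρ hU hδ hδ₀ hsmall hSk
  have hs0 : ENNReal.ofReal s ≠ 0 := by simpa using hs
  have hst : ENNReal.ofReal s ≠ ∞ := ENNReal.ofReal_ne_top
  set T : Euc n → Euc n := fun z => y + s • z with hT
  let V : Euc n → Euc n := fun x => s⁻¹ • (x - y)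
  have hTV : ∀ x, T (V x) = x := fun x => by simp [T, V, smul_smul, hs.ne']
  have hVT : ∀ z, V (T z) = z := fun z => by simp [T, V, smul_smul, hs.ne']
  have hdT : ∀ z, dist (T z) y = s * ‖z‖ := fun z => by
    simp [T, norm_smul, abs_of_pos hs]
  have hdV : ∀ x, dist x y = s * ‖V x‖ := fun x => by rw [← hdT, hTV]
  have hVL : LipschitzWith ⟨s⁻¹, (inv_pos.2 hs).le⟩ V := LipschitzWith.of_dist_le_mul fun x x' => by
    simp only [V]
    rw [dist_smul₀, dist_sub_right, Real.norm_of_nonneg (inv_pos.2 hs).le]; rfl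
  have hTL : LipschitzWith ⟨s, hs.le⟩ T := LipschitzWith.of_dist_le_mul fun x x' => by
    simp only [T]
    rw [dist_add_left, dist_smul₀, Real.norm_of_nonneg hs.le]; rfl
  have hn : (0:ℝ) ≤ n := Nat.cast_nonneg n
  have hU2 : closedBall y ((ρ + 2) * s) ⊆ U :=
    (closedBall_subset_closedBall (mul_le_mul_of_nonneg_right (by linarith) hs.le)).trans hU
  let K : Set (Euc n) := V '' (E ∩ closedBall y ((ρ + 2) * s))
  have hTK : T '' K = E ∩ closedBall y ((ρ + 2) * s) := by
    rw [image_image]; simp [hTV]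
  have hKc : IsCompact K := (gaq_isCompact hE hU2).image hVL.continuous
  have hscale : ∀ (e : ℕ) (A : Set (Euc n)),
      μH[(e:ℝ)] (T '' A) = ENNReal.ofReal s ^ e * μH[(e:ℝ)] A :=
    fun e A => hausdorffMeasure_scale hs y A
  have hKd : μH[(d:ℝ)] K ≠ ∞ := by
    intro hc
    have h1 := hscale d K
    rw [hTK, hc, ENNReal.mul_top (pow_ne_zero _ hs0)] at h1
    exact (hE.2.2.1 y _ hU2).ne h1
  have hKk : 2 ^ n * μH[((k + 1 : ℕ) : ℝ)] K ≤ 1 / 4 := by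
    rw [← hTK, hscale, mul_left_comm, mul_comm (1 / 4)] at hsmall
    exact (ENNReal.mul_le_mul_iff_right (pow_ne_zero _ hs0) (ENNReal.pow_ne_top hst)).1 hsmall
  obtain ⟨a, f, Z, ha, ⟨L, hL⟩, hfid, hfn, hfK, hfZ, hZ⟩ := hC2 ρ K hKc hKd hKk
  let F : Euc n → Euc n := fun x => T (f (V x))
  have hFL : LipschitzWith _ F := hTL.comp (hL.comp hVL)
  have hmemK : ∀ x ∈ E, ‖V x‖ ≤ ρ + 2 → V x ∈ K := fun x hx hv => by
    refine ⟨x, ⟨hx, ?_⟩, rfl⟩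
    rw [mem_closedBall, hdV, mul_comm]
    gcongr
  have hFid : ∀ x, ρ + 2 ≤ ‖V x‖ → F x = x := fun x hx => by
    simp only [F]; rw [hfid _ hx, hTV]
  have hFid2 : ∀ x, f (V x) = V x → F x = x := fun x hx => by
    simp only [F]; rw [hx, hTV]
  have hfn2 : ∀ z, ‖z‖ ≤ ρ + 2 → ‖f z‖ ≤ ρ + 2 + 2 * n := fun z hz => by
    have h1 := norm_le_insert' (f z) z
    linarith [hfn z]
  have hiff : ∀ {c : ℝ} x, x ∈ closedBall y (c * s) ↔ ‖V x‖ ≤ c := fun {c} x => by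
    rw [mem_closedBall, hdV, mul_comm, mul_le_mul_iff_left₀ hs]
  have hqm := gaq_apply hE ⟨_, hFL⟩ (y := y) (R := (ρ + 2 + 2 * n) * s) (by positivity) hU
    (fun x hx => hFid x (by
      rw [hiff, not_le] at hx; linarith))
    (fun x hx => by
      by_cases hc : ρ + 2 ≤ ‖V x‖
      · rwa [hFid x hc]
      · rw [hiff]; simp only [F]; rw [hVT]; exact hfn2 _ (not_le.1 hc).le)
    hδ hδ₀
  set W := E ∩ {x | F x ≠ x} with hW
  set B := closedBall (0 : Euc n) (ρ + 2 + 2 * n) with hB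
  set lay : Set (Euc n) := {x | ρ * s < dist x y ∧ dist x y < (ρ + 2) * s} with hlay
  have hsk : μH[(d:ℝ)] (T '' (skel k a ∩ B)) ≤ ENNReal.ofReal s ^ d * Sk := by
    rw [hscale]; gcongr; exact hSk a ha
  have h1 : E ∩ closedBall y (ρ * s) ⊆ W ∪ T '' (skel k a ∩ B) := by
    rintro x ⟨hx, hxb⟩
    rw [hiff] at hxb
    by_cases hc : F x = x
    · right
      refine ⟨f (V x), ⟨hfK _ (hmemK x hx (by linarith)) hxb, ?_⟩, hc⟩
      rw [hB, mem_closedBall_zero_iff]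
      exact hfn2 _ (by linarith)
    · exact Or.inl ⟨hx, hc⟩
  have h2 : F '' W ⊆ T '' (skel k a ∩ B) ∪ T '' (f '' Z) := by
    rintro _ ⟨x, ⟨hx, hne⟩, rfl⟩
    have hv : ‖V x‖ ≤ ρ + 2 := by
      by_contra hc
      exact hne (hFid x (not_le.1 hc).le)
    rcases hfZ _ (hmemK x hx hv) (fun hc => hne (hFid2 x hc)) with h3 | h3
    · refine Or.inl ⟨_, ⟨h3, ?_⟩, rfl⟩
      rw [hB, mem_closedBall_zero_iff]
      exact hfn2 _ hv
    · exact Or.inr ⟨_, ⟨_, h3, rfl⟩, rfl⟩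
  have h3 : μH[(d:ℝ)] (T '' (f '' Z)) ≤ C * μH[(d:ℝ)] (E ∩ lay) := by
    rw [hscale]
    calc _ ≤ ENNReal.ofReal s ^ d * (C * μH[(d:ℝ)] (K ∩ {x | ρ < ‖x‖ ∧ ‖x‖ < ρ + 2})) := by gcongr
      _ = C * μH[(d:ℝ)] (T '' (K ∩ {x | ρ < ‖x‖ ∧ ‖x‖ < ρ + 2})) := by rw [hscale]; ring
      _ ≤ C * μH[(d:ℝ)] (E ∩ lay) := by
        gcongr
        rintro _ ⟨z, ⟨hz, hz1, hz2⟩, rfl⟩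
        refine ⟨((hTK.subset (mem_image_of_mem T hz))).1, ?_, ?_⟩
        · rw [hdT, mul_comm]; gcongr
        · rw [hdT, mul_comm]; gcongr
  calc μH[(d:ℝ)] (E ∩ closedBall y (ρ * s)) ≤ μH[(d:ℝ)] W + ENNReal.ofReal s ^ d * Sk :=
        (measure_mono h1).trans ((measure_union_le _ _).trans (by gcongr))
    _ ≤ (ENNReal.ofReal M * (ENNReal.ofReal s ^ d * Sk + C * μH[(d:ℝ)] (E ∩ lay)) +
          ENNReal.ofReal (h * δ ^ d)) + ENNReal.ofReal s ^ d * Sk := by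
        gcongr
        refine hqm.trans ?_
        gcongr
        exact (measure_mono h2).trans ((measure_union_le _ _).trans (by gcongr))
    _ = _ := by ring

/-- Averaging `gaq_step` over `N` disjoint transition layers gains a factor `1 / N`. -/
lemma gaq_layers {n k d : ℕ} (hk : k + 1 ≤ n) (hdk : d ≤ k + 1) :
    ∃ C : ℝ≥0∞, C ≠ ∞ ∧ ∀ {M : ℝ} {δ₀ : ℝ≥0∞} {U : Set (Euc n)} {h : ℝ} {E : Set (Euc n)},
      GAQ n d M δ₀ U h E → ∀ (y : Euc n) {s P δ : ℝ} (N : ℕ) (Sk : ℝ≥0∞), 0 < s → 0 ≤ P →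
      0 < N → closedBall y ((P + 2 * N + 2 * n) * s) ⊆ U →
      2 * ((P + 2 * N + 2 * n) * s) < δ → ENNReal.ofReal δ ≤ δ₀ →
      2 ^ n * μH[((k + 1 : ℕ) : ℝ)] (E ∩ closedBall y ((P + 2 * N) * s)) ≤
        1 / 4 * ENNReal.ofReal s ^ (k + 1) →
      (∀ a : Fin n → ℝ, (∀ i, a i ∈ Icc (0:ℝ) 1) →
        μH[(d:ℝ)] (skel k a ∩ closedBall 0 (P + 2 * N + 2 * n)) ≤ Sk) →
      μH[(d:ℝ)] (E ∩ closedBall y (P * s)) ≤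
        (ENNReal.ofReal M + 1) * (ENNReal.ofReal s ^ d * Sk) + ENNReal.ofReal (h * δ ^ d) +
        ENNReal.ofReal M * C / N * μH[(d:ℝ)] (E ∩ closedBall y ((P + 2 * N) * s)) := by
  obtain ⟨C, hC, hstep⟩ := gaq_step (n := n) hk hdk
  refine ⟨C, hC, ?_⟩
  intro M δ₀ U h E hE y s P δ N Sk hs hP hN hU hδ hδ₀ hsmall hSk
  set X := (ENNReal.ofReal M + 1) * (ENNReal.ofReal s ^ d * Sk) + ENNReal.ofReal (h * δ ^ d)
  let lay : ℕ → Set (Euc n) := fun i =>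
    {x | (P + 2 * i) * s < dist x y ∧ dist x y < (P + 2 * i + 2) * s}
  have hdm : Measurable fun x : Euc n => dist x y := by fun_prop
  have hlm : ∀ i, MeasurableSet (lay i) := fun i =>
    (measurableSet_lt measurable_const hdm).inter (measurableSet_lt hdm measurable_const)
  have hdisj : Pairwise (Function.onFun Disjoint lay) := by
    rw [pairwise_disjoint_on]
    intro i j hij
    rw [Set.disjoint_left]
    rintro x ⟨-, h1⟩ ⟨h2, -⟩
    have h3 : (i:ℝ) + 1 ≤ j := by exact_mod_cast hij
    have h4 : (P + 2 * i + 2) * s ≤ (P + 2 * j) * s :=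
      mul_le_mul_of_nonneg_right (by linarith) hs.le
    linarith
  have hone : ∀ i ∈ Finset.range N, μH[(d:ℝ)] (E ∩ closedBall y (P * s)) ≤
      X + ENNReal.ofReal M * C * μH[(d:ℝ)] (E ∩ lay i) := by
    intro i hi
    have hi' : (i:ℝ) + 1 ≤ N := by exact_mod_cast Finset.mem_range.1 hi
    have hi0 : (0:ℝ) ≤ i := Nat.cast_nonneg i
    have hle : (P + 2 * i + 2 + 2 * n) * s ≤ (P + 2 * N + 2 * n) * s :=
      mul_le_mul_of_nonneg_right (by linarith) hs.le
    have hle2 : (P + 2 * i + 2) * s ≤ (P + 2 * N) * s :=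
      mul_le_mul_of_nonneg_right (by linarith) hs.le
    have h1 := hstep hE y (s := s) (ρ := P + 2 * i) (δ := δ) Sk hs (by positivity)
      ((closedBall_subset_closedBall hle).trans hU) (by linarith) hδ₀
      (by
        refine le_trans ?_ hsmall
        gcongr 2 ^ n * μH[_] (E ∩ closedBall y ?_))
      (fun a ha => by
        refine le_trans ?_ (hSk a ha)
        gcongr μH[_] (skel k a ∩ closedBall 0 ?_)
        linarith)
    refine le_trans ?_ h1
    gcongr
    linarith
  have hsum : ∑ i ∈ Finset.range N, μH[(d:ℝ)] (E ∩ lay i) ≤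
      μH[(d:ℝ)] (E ∩ closedBall y ((P + 2 * N) * s)) := by
    have e : ∀ i, μH[(d:ℝ)] (E ∩ lay i) = (μH[(d:ℝ)] : Measure (Euc n)).restrict E (lay i) :=
      fun i => by rw [Measure.restrict_apply (hlm i), inter_comm]
    simp_rw [e]
    rw [← measure_biUnion_finset (fun i _ j _ hij => hdisj hij) (fun i _ => hlm i)]
    rw [inter_comm, ← Measure.restrict_apply isClosed_closedBall.measurableSet]
    refine measure_mono (iUnion₂_subset fun i hi x hx => ?_)
    have hi' : (i:ℝ) + 1 ≤ N := by exact_mod_cast Finset.mem_range.1 hi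
    rw [mem_closedBall]
    exact hx.2.le.trans (mul_le_mul_of_nonneg_right (by linarith) hs.le)
  have hN0 : (N:ℝ≥0∞) ≠ 0 := by exact_mod_cast hN.ne'
  have hNt : (N:ℝ≥0∞) ≠ ∞ := ENNReal.natCast_ne_top N
  have hmain : N * μH[(d:ℝ)] (E ∩ closedBall y (P * s)) ≤
      N * (X + ENNReal.ofReal M * C / N * μH[(d:ℝ)] (E ∩ closedBall y ((P + 2 * N) * s))) := by
    calc N * μH[(d:ℝ)] (E ∩ closedBall y (P * s))
        = ∑ _i ∈ Finset.range N, μH[(d:ℝ)] (E ∩ closedBall y (P * s)) := by simp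
      _ ≤ ∑ i ∈ Finset.range N, (X + ENNReal.ofReal M * C * μH[(d:ℝ)] (E ∩ lay i)) :=
          Finset.sum_le_sum hone
      _ = N * X + ENNReal.ofReal M * C * ∑ i ∈ Finset.range N, μH[(d:ℝ)] (E ∩ lay i) := by
          rw [Finset.sum_add_distrib, ← Finset.mul_sum]; simp
      _ ≤ N * X + ENNReal.ofReal M * C * μH[(d:ℝ)] (E ∩ closedBall y ((P + 2 * N) * s)) := by
          gcongr
      _ = _ := by
          rw [mul_add (N:ℝ≥0∞) X, ← mul_assoc (N:ℝ≥0∞) (_ / _), ENNReal.mul_div_cancel hN0 hNt]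
  exact (ENNReal.mul_le_mul_iff_right hN0 hNt).1 hmain

/-! ### The lower bound -/

lemma exists_nat_div_le {B : ℝ≥0∞} (hB : B ≠ ∞) {θ : ℝ} (hθ : 0 < θ) :
    ∃ N : ℕ, 0 < N ∧ B / N ≤ ENNReal.ofReal θ := by
  have h0 : ENNReal.ofReal θ ≠ 0 := by simpa using hθ
  obtain ⟨N, hN⟩ := ENNReal.exists_nat_gt (ENNReal.div_ne_top hB h0)
  have hN0 : 0 < N := by
    rcases Nat.eq_zero_or_pos N with h | h
    · simp [h] at hN
    · exact h
  refine ⟨N, hN0, ENNReal.div_le_of_le_mul ?_⟩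
  rw [mul_comm]
  exact (ENNReal.div_le_iff_le_mul (Or.inl h0) (Or.inl ENNReal.ofReal_ne_top)).1 hN.le

/-- A small density ratio does not increase when the radius is halved: projecting to the
`(d-1)`-skeleton erases the part of `E` in the smaller ball, up to the cost paid in the
transition layer. -/
lemma gaq_decay {n d : ℕ} (hd : 1 ≤ d) (hdn : d ≤ n) (M : ℝ) :
    ∃ ε₁ : ℝ, 0 < ε₁ ∧ ∀ ε : ℝ, 0 < ε → ε ≤ ε₁ →
      ∀ {δ₀ : ℝ≥0∞} {U : Set (Euc n)} {h : ℝ} {E : Set (Euc n)}, GAQ n d M δ₀ U h E →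
      0 ≤ h → h ≤ ε / (2 * 6 ^ d) → ∀ (y : Euc n) {r : ℝ}, 0 < r → closedBall y r ⊆ U →
      ENNReal.ofReal (3 * r) ≤ δ₀ →
      μH[(d:ℝ)] (E ∩ closedBall y r) ≤ ENNReal.ofReal (ε * r ^ d) →
      μH[(d:ℝ)] (E ∩ closedBall y (r / 2)) ≤ ENNReal.ofReal (ε * (r / 2) ^ d) := by
  obtain ⟨k, rfl⟩ : ∃ k, d = k + 1 := ⟨d - 1, by lia⟩
  obtain ⟨C, hC, hlay⟩ := gaq_layers (n := n) (d := k + 1) hdn le_rfl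
  obtain ⟨N, hN, hNle⟩ := exists_nat_div_le (B := ENNReal.ofReal M * C) (by finiteness)
    (θ := 1 / (2 * 2 ^ (k + 1))) (by positivity)
  set P : ℝ := 2 * N + 2 * n with hP
  have hN' : (0:ℝ) < N := by exact_mod_cast hN
  have hn' : (0:ℝ) ≤ n := Nat.cast_nonneg n
  have hP0 : 0 < P := by positivity
  refine ⟨1 / (4 * 2 ^ n * (2 * P) ^ (k + 1)), by positivity, ?_⟩
  intro ε hε hε1 δ₀ U h E hE hh hh1 y r hr hU hδ₀ hm
  set s : ℝ := r / (2 * P) with hs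
  have hs0 : 0 < s := by positivity
  have e1 : P * s = r / 2 := by rw [hs]; field_simp
  have e2 : (P + 2 * N + 2 * n) * s = r := by
    rw [hs]; field_simp; rw [hP]; ring
  have e3 : (P + 2 * N) * s ≤ r := by
    rw [← e2]; exact mul_le_mul_of_nonneg_right (by linarith) hs0.le
  have hm' : μH[((k + 1 : ℕ):ℝ)] (E ∩ closedBall y ((P + 2 * N) * s)) ≤
      ENNReal.ofReal (ε * r ^ (k + 1)) := le_trans (by gcongr) hm
  have h1 := hlay hE y (s := s) (P := P) (δ := 3 * r) N 0 hs0 hP0.le hN (by rwa [e2])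
    (by rw [e2]; linarith) hδ₀
    (by
      calc 2 ^ n * μH[((k + 1 : ℕ):ℝ)] (E ∩ closedBall y ((P + 2 * N) * s))
          ≤ 2 ^ n * ENNReal.ofReal (ε * r ^ (k + 1)) := by gcongr
        _ = ENNReal.ofReal (2 ^ n * (ε * r ^ (k + 1))) := by
            rw [ENNReal.ofReal_mul (p := 2 ^ n) (by positivity),
              ENNReal.ofReal_pow zero_le_two]; simp
        _ ≤ ENNReal.ofReal (1 / 4 * s ^ (k + 1)) := by
            refine ENNReal.ofReal_le_ofReal ?_
            have : 2 ^ n * (ε * r ^ (k + 1)) ≤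
                2 ^ n * (1 / (4 * 2 ^ n * (2 * P) ^ (k + 1)) * r ^ (k + 1)) := by gcongr
            refine this.trans_eq ?_
            rw [hs, div_pow]; field_simp
        _ = 1 / 4 * ENNReal.ofReal s ^ (k + 1) := by
            rw [ENNReal.ofReal_mul (by positivity), ENNReal.ofReal_pow hs0.le,
              ENNReal.ofReal_div_of_pos (by norm_num)]; simp)
    (fun a ha => (hausdorffMeasure_skel_eq_zero (Nat.lt_succ_self k) ha (by positivity)).le)
  rw [e1] at h1
  refine h1.trans ?_
  rw [mul_zero, mul_zero, zero_add]
  calc _ ≤ ENNReal.ofReal (h * (3 * r) ^ (k + 1)) +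
        ENNReal.ofReal (1 / (2 * 2 ^ (k + 1))) * ENNReal.ofReal (ε * r ^ (k + 1)) := by gcongr
    _ = ENNReal.ofReal (h * (3 * r) ^ (k + 1) + 1 / (2 * 2 ^ (k + 1)) * (ε * r ^ (k + 1))) := by
        rw [← ENNReal.ofReal_mul (by positivity), ENNReal.ofReal_add (by positivity)
          (by positivity)]
    _ ≤ ENNReal.ofReal (ε * (r / 2) ^ (k + 1)) := by
        refine ENNReal.ofReal_le_ofReal ?_
        have : h * (3 * r) ^ (k + 1) ≤ ε / (2 * 6 ^ (k + 1)) * (3 * r) ^ (k + 1) := by gcongr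
        refine (add_le_add_left this _).trans_eq ?_
        rw [show (6:ℝ) = 2 * 3 by norm_num, mul_pow, mul_pow, div_pow]
        field_simp; ring

/-- A set of finite measure whose upper densities are uniformly small is null. -/
lemma hausdorffMeasure_eq_zero_of_density {n d : ℕ} (hd : 1 ≤ d) {A : Set (Euc n)}
    (hA : MeasurableSet A) (hfin : μH[(d:ℝ)] A ≠ ∞) {r : ℝ} (hr : 0 < r)
    (h : ∀ y ∈ A, ∀ t : ℝ, 0 < t → t ≤ r →
      2 * μH[(d:ℝ)] (A ∩ closedBall y t) ≤ ENNReal.ofReal t ^ d) : μH[(d:ℝ)] A = 0 := by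
  have h1 : (2:ℝ≥0∞) • (μH[(d:ℝ)] : Measure (Euc n)).restrict A ≤ μH[(d:ℝ)] := by
    refine Measure.le_hausdorffMeasure _ _ (ENNReal.ofReal r) (by simpa using hr) fun S hS => ?_
    rw [Measure.smul_apply, Measure.restrict_apply' hA, smul_eq_mul, ENNReal.rpow_natCast]
    rcases (S ∩ A).eq_empty_or_nonempty with h0 | ⟨y, hyS, hyA⟩
    · simp [h0]
    have hdt : ediam S ≠ ∞ := (hS.trans_lt ENNReal.ofReal_lt_top).ne
    rcases eq_or_ne (ediam S) 0 with h0 | h0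
    · have hsub : S.Subsingleton := ediam_eq_zero_iff.1 h0
      have := Measure.nullSingletonClass_hausdorff (Euc n)
        (d := (d:ℝ)) (by exact_mod_cast hd)
      rw [(hsub.anti inter_subset_left).measure_zero]
      simp
    have ht : ENNReal.ofReal (ediam S).toReal = ediam S := ENNReal.ofReal_toReal hdt
    have h2 := h y hyA (ediam S).toReal (ENNReal.toReal_pos h0 hdt) (by
      exact ENNReal.toReal_le_of_le_ofReal hr.le hS)
    rw [ht] at h2
    refine le_trans ?_ h2
    refine mul_le_mul' le_rfl (measure_mono ?_)
    rintro z ⟨hz, hzA⟩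
    refine ⟨hzA, ?_⟩
    rw [mem_closedBall, dist_edist]
    exact ENNReal.toReal_mono hdt (edist_le_ediam_of_mem hz hyS)
  have h2 := h1 A
  rw [Measure.smul_apply, Measure.restrict_apply_self, smul_eq_mul] at h2
  by_contra h0
  have h3 : (2:ℝ≥0∞) ≤ 1 := by
    refine (ENNReal.mul_le_mul_iff_left h0 hfin).1 ?_
    rwa [one_mul]
  norm_num at h3

/-- If the density ratio at `(x, r)` were too small, `gaq_decay` would propagate this to all
smaller balls centred near `x`, and `E` would be null near `x` by the density lemma. -/
lemma gaq_lower {n d : ℕ} (hd : 1 ≤ d) (hdn : d ≤ n) (M : ℝ) :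
    ∃ h₀ c : ℝ, 0 < h₀ ∧ 0 < c ∧
      ∀ {δ₀ : ℝ≥0∞} {U : Set (Euc n)} {h : ℝ} {E : Set (Euc n)}, GAQ n d M δ₀ U h E →
      0 ≤ h → h ≤ h₀ → ∀ x : Euc n, (∀ ρ : ℝ, 0 < ρ → 0 < μH[(d:ℝ)] (E ∩ ball x ρ)) →
      ∀ r : ℝ, 0 < r → ENNReal.ofReal r < δ₀ → ball x (2 * r) ⊆ U →
        ENNReal.ofReal (c * r ^ d) ≤ μH[(d:ℝ)] (E ∩ ball x r) := by
  obtain ⟨ε₁, hε₁, hdec⟩ := gaq_decay hd hdn M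
  set ε : ℝ := min ε₁ (1 / (2 * 2 ^ d)) with hε
  have hε0 : 0 < ε := lt_min hε₁ (by positivity)
  refine ⟨ε / (2 * 6 ^ d), ε / 8 ^ d, by positivity, by positivity, ?_⟩
  intro δ₀ U h E hE hh hh1 x hx r hr hδ₀ hU
  by_contra hc
  rw [not_le] at hc
  have hballU : closedBall x (r / 2) ⊆ U :=
    (closedBall_subset_ball (by linarith)).trans hU
  set A := E ∩ ball x (r / 2) with hA
  have hAeq : A = (E ∩ closedBall x (r / 2)) ∩ ball x (r / 2) := by
    rw [hA, inter_assoc, inter_eq_right.2 ball_subset_closedBall]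
  have hAm : MeasurableSet A := by
    rw [hAeq]; exact (gaq_isCompact hE hballU).measurableSet.inter measurableSet_ball
  have hAfin : μH[(d:ℝ)] A ≠ ∞ :=
    ((measure_mono (inter_subset_inter_right _ ball_subset_closedBall)).trans_lt
      (hE.2.2.1 x _ hballU)).ne
  refine (hx (r / 2) (by positivity)).ne' (hausdorffMeasure_eq_zero_of_density hd hAm hAfin
    (r := r / 8) (by positivity) fun y hy t ht htr => ?_)
  have hyx : dist y x < r / 2 := hy.2
  have hsub : ∀ u ≤ r / 8, closedBall y u ⊆ ball x r := fun u hu =>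
    closedBall_subset_ball' (by linarith)
  have hbU : ball x r ⊆ U := (ball_subset_ball (by linarith)).trans hU
  have hiter : ∀ j : ℕ, μH[(d:ℝ)] (E ∩ closedBall y (r / 8 / 2 ^ j)) ≤
      ENNReal.ofReal (ε * (r / 8 / 2 ^ j) ^ d) := by
    intro j
    induction j with
    | zero =>
      rw [pow_zero, div_one]
      refine (measure_mono (inter_subset_inter_right _ (hsub _ le_rfl))).trans (hc.le.trans_eq ?_)
      congr 1; rw [div_pow]; ring
    | succ j ih =>
      have hle : r / 8 / 2 ^ j ≤ r / 8 := div_le_self (by positivity) (one_le_pow₀ one_le_two)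
      have h1 := hdec ε hε0 (min_le_left _ _) hE hh hh1 y (r := r / 8 / 2 ^ j) (by positivity)
        ((hsub _ hle).trans hbU)
        (le_trans (ENNReal.ofReal_le_ofReal (by linarith)) hδ₀.le) ih
      rwa [div_div, ← pow_succ] at h1
  -- choose the dyadic radius just above `t`
  obtain ⟨j, hj1, hj2⟩ : ∃ j : ℕ, t ≤ r / 8 / 2 ^ j ∧ r / 8 / 2 ^ j ≤ 2 * t := by
    obtain ⟨j, hj1, hj2⟩ := exists_nat_pow_near (x := r / 8 / t) (y := (2:ℝ))
      ((one_le_div ht).2 htr) one_lt_two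
    refine ⟨j, ?_, ?_⟩
    · rw [le_div_iff₀ ht] at hj1
      rw [le_div_iff₀ (by positivity)]; linarith
    · rw [div_lt_iff₀ ht, pow_succ] at hj2
      rw [div_le_iff₀ (by positivity)]; linarith
  calc 2 * μH[(d:ℝ)] (A ∩ closedBall y t)
      ≤ 2 * μH[(d:ℝ)] (E ∩ closedBall y (r / 8 / 2 ^ j)) := by
        gcongr
        exact inter_subset_left
    _ ≤ 2 * ENNReal.ofReal (ε * (r / 8 / 2 ^ j) ^ d) := by gcongr; exact hiter j
    _ ≤ 2 * ENNReal.ofReal (1 / (2 * 2 ^ d) * (2 * t) ^ d) := by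
        gcongr; exact min_le_right _ _
    _ = ENNReal.ofReal t ^ d := by
        rw [← ENNReal.ofReal_ofNat 2, ← ENNReal.ofReal_mul zero_le_two, ← ENNReal.ofReal_pow ht.le]
        congr 1
        rw [mul_pow]; field_simp

/-! ### The upper bound -/

/-- A geometric absorption argument: a bounded sequence whose growth is controlled by
`m j ≤ B q ^ j + (2 q)⁻¹ m (j + 1)` starts below `2 B`. -/
lemma absorb_geometric {m : ℕ → ℝ} {B q T : ℝ} (hq : 1 ≤ q) (hT : ∀ j, m j ≤ T)
    (hm : ∀ j, m j ≤ B * q ^ j + 1 / (2 * q) * m (j + 1)) : m 0 ≤ 2 * B := by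
  have hq0 : 0 < q := by linarith
  have key : ∀ J : ℕ, m 0 ≤ B * (2 - 2 * (1 / 2) ^ J) + (1 / (2 * q)) ^ J * m J := by
    intro J
    induction J with
    | zero => simp
    | succ J ih =>
      refine ih.trans ?_
      have h1 : (1 / (2 * q)) ^ J * m J ≤
          (1 / (2 * q)) ^ J * (B * q ^ J + 1 / (2 * q) * m (J + 1)) :=
        mul_le_mul_of_nonneg_left (hm J) (by positivity)
      have h2 : (1 / (2 * q)) ^ J * q ^ J = (1 / 2) ^ J := by
        rw [← mul_pow]; congr 1; field_simp
      calc _ ≤ B * (2 - 2 * (1 / 2) ^ J) +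
            (1 / (2 * q)) ^ J * (B * q ^ J + 1 / (2 * q) * m (J + 1)) := by gcongr
        _ = B * (2 - 2 * (1 / 2) ^ J) + B * ((1 / (2 * q)) ^ J * q ^ J) +
            (1 / (2 * q)) ^ (J + 1) * m (J + 1) := by rw [pow_succ (1 / (2 * q))]; ring
        _ = _ := by rw [h2, pow_succ (1 / 2 : ℝ)]; ring
  have hle : ∀ J : ℕ, m 0 ≤ B * (2 - 2 * (1 / 2) ^ J) + (1 / (2 * q)) ^ J * T := fun J =>
    (key J).trans (by gcongr; exact hT J)
  have hlt : 1 / (2 * q) < 1 := by rw [div_lt_one (by positivity)]; linarith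
  have t1 := tendsto_pow_atTop_nhds_zero_of_lt_one (r := (1 / 2 : ℝ)) (by norm_num) (by norm_num)
  have t2 := tendsto_pow_atTop_nhds_zero_of_lt_one (r := 1 / (2 * q)) (by positivity) hlt
  have t3 := ((t1.const_mul 2).const_sub 2).const_mul B |>.add (t2.mul_const T)
  have := ge_of_tendsto' t3 hle
  linarith

/-- Projection to the `d`-skeletons of grids of mesh `s 2⁻ʲ`, in balls of radii increasing from
`r / 2` to `r`, bounds the measure in the smallest ball. The measure of these skeletons grows
only geometrically in `j`, which the small factor in front of the transition layers absorbs. -/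
lemma gaq_upper_half {n d : ℕ} (hdn : d < n) (M : ℝ) :
    ∃ A : ℝ≥0∞, A ≠ ∞ ∧
      ∀ {δ₀ : ℝ≥0∞} {U : Set (Euc n)} {h : ℝ} {E : Set (Euc n)}, GAQ n d M δ₀ U h E →
      0 ≤ h → h ≤ 1 → ∀ (y : Euc n) {r : ℝ}, 0 < r → closedBall y r ⊆ U →
      ENNReal.ofReal (3 * r) ≤ δ₀ →
      μH[(d:ℝ)] (E ∩ closedBall y (r / 2)) ≤ A * ENNReal.ofReal r ^ d := by
  obtain ⟨C, hC, hlay⟩ := gaq_layers (n := n) (d := d) (k := d) hdn (by lia)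
  set q : ℝ := 2 ^ (n + d) with hq
  have hq1 : 1 ≤ q := one_le_pow₀ one_le_two
  obtain ⟨N, hN, hNle⟩ := exists_nat_div_le (B := ENNReal.ofReal M * C) (by finiteness)
    (θ := 1 / (2 * q)) (by positivity)
  have hN' : (1:ℝ) ≤ N := by exact_mod_cast hN
  have hn' : (0:ℝ) ≤ n := Nat.cast_nonneg n
  set Q : ℝ := 2 * (4 * N + 2 * n) with hQ
  have hQ1 : 1 ≤ Q := by linarith
  set K : ℝ≥0∞ := 2 ^ n * 7 ^ n * n ^ d * 2 ^ d with hK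
  have hKt : K ≠ ∞ := by finiteness
  set A : ℝ≥0∞ := (ENNReal.ofReal M + 1) * (K * ENNReal.ofReal (1 + Q) ^ (n + d)) + 3 ^ d with hA
  have hAt : A ≠ ∞ := by finiteness
  refine ⟨2 * A, by finiteness, ?_⟩
  intro δ₀ U h E hE hh hh1 y r hr hU hδ₀
  set s : ℝ := r / Q with hs
  have hs0 : 0 < s := by positivity
  have hsr : s ≤ r := div_le_self hr.le hQ1
  have hQs : Q * s = r := by rw [hs]; field_simp
  let sj : ℕ → ℝ := fun j => s / 2 ^ j
  let P : ℕ → ℝ := fun j => 2 ^ j * (Q - 2 * n) - 4 * N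
  have h2j : ∀ j : ℕ, (1:ℝ) ≤ 2 ^ j := fun j => one_le_pow₀ one_le_two
  have hsj : ∀ j, 0 < sj j := fun j => by positivity
  have hsjs : ∀ j, sj j ≤ s := fun j => div_le_self hs0.le (h2j j)
  have hP0 : ∀ j, 0 ≤ P j := fun j => by
    have : 0 ≤ (2 ^ j - 1 : ℝ) * (Q - 2 * n) :=
      mul_nonneg (by linarith [h2j j]) (by linarith)
    simp only [P]; linarith
  have hR : ∀ j, P j + 2 * N + 2 * n ≤ 2 ^ j * Q := fun j => by
    have : 0 ≤ (2 ^ j - 1 : ℝ) * (2 * n) := mul_nonneg (by linarith [h2j j]) (by linarith)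
    simp only [P]; linarith
  have hRr : ∀ j, (P j + 2 * N + 2 * n) * sj j ≤ r := fun j => by
    calc _ ≤ 2 ^ j * Q * sj j := mul_le_mul_of_nonneg_right (hR j) (hsj j).le
      _ = r := by rw [← hQs]; simp only [sj]; field_simp
  have hnext : ∀ j, (P j + 2 * N) * sj j = P (j + 1) * sj (j + 1) := fun j => by
    simp only [P, sj, pow_succ]; field_simp; ring
  have hstart : P 0 * sj 0 = r / 2 := by
    rw [← hQs]; simp only [P, sj, pow_zero, div_one, hQ]; ring
  have hle : ∀ j, P j * sj j ≤ r := fun j =>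
    (mul_le_mul_of_nonneg_right (by linarith) (hsj j).le).trans (hRr j)
  have hfin : ∀ t ≤ r, μH[(d:ℝ)] (E ∩ closedBall y t) < ∞ := fun t ht =>
    hE.2.2.1 y t ((closedBall_subset_closedBall ht).trans hU)
  let m : ℕ → ℝ≥0∞ := fun j => μH[(d:ℝ)] (E ∩ closedBall y (P j * sj j))
  have hmt : ∀ j, m j ≠ ∞ := fun j => (hfin _ (hle j)).ne
  have hstep : ∀ j, m j ≤ A * ENNReal.ofReal r ^ d * ENNReal.ofReal q ^ j +
      ENNReal.ofReal (1 / (2 * q)) * m (j + 1) := by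
    intro j
    have h1 := hlay hE y (s := sj j) (P := P j) (δ := 3 * r) N
      (K * (ENNReal.ofReal (1 + Q) ^ (n + d) * ENNReal.ofReal q ^ j)) (hsj j) (hP0 j) hN
      ((closedBall_subset_closedBall (hRr j)).trans hU) (by linarith [hRr j]) hδ₀
      (by
        -- finiteness of the `d`-dimensional measure kills the `(d + 1)`-dimensional one
        rw [hnext]
        rcases Measure.hausdorffMeasure_zero_or_top
          (show (d:ℝ) < ((d + 1 : ℕ):ℝ) by exact_mod_cast Nat.lt_succ_self d)
          (E ∩ closedBall y (P (j + 1) * sj (j + 1))) with h0 | h0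
        · rw [h0, mul_zero]; exact zero_le
        · exact absurd h0 (hmt (j + 1)))
      (by
        intro a ha
        refine (hausdorffMeasure_skel_le ha (by linarith [hP0 j])).trans ?_
        refine mul_le_mul' le_rfl ?_
        rw [hq, ENNReal.ofReal_pow zero_le_two, ← pow_mul, mul_comm (n + d) j, pow_mul, ← mul_pow,
          ← ENNReal.ofReal_pow zero_le_two, ← ENNReal.ofReal_mul (by linarith)]
        gcongr
        linarith [hR j, h2j j])
    rw [hnext] at h1
    refine h1.trans (add_le_add ?_ (mul_le_mul' hNle le_rfl))
    have hsd : ENNReal.ofReal (sj j) ^ d ≤ ENNReal.ofReal r ^ d := by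
      gcongr; exact (hsjs j).trans hsr
    have hhd : ENNReal.ofReal (h * (3 * r) ^ d) ≤
        3 ^ d * ENNReal.ofReal r ^ d * ENNReal.ofReal q ^ j := by
      calc ENNReal.ofReal (h * (3 * r) ^ d) ≤ ENNReal.ofReal (3 * r) ^ d := by
            rw [← ENNReal.ofReal_pow (by positivity)]
            exact ENNReal.ofReal_le_ofReal (mul_le_of_le_one_left (by positivity) hh1)
        _ = 3 ^ d * ENNReal.ofReal r ^ d * 1 := by
            rw [ENNReal.ofReal_mul (by norm_num), mul_pow]; simp
        _ ≤ _ := by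
            gcongr
            exact one_le_pow₀ (by simpa using hq1)
    calc _ ≤ (ENNReal.ofReal M + 1) * (ENNReal.ofReal r ^ d *
          (K * (ENNReal.ofReal (1 + Q) ^ (n + d) * ENNReal.ofReal q ^ j))) +
          3 ^ d * ENNReal.ofReal r ^ d * ENNReal.ofReal q ^ j := by gcongr
      _ = _ := by rw [hA]; ring
  have hreal : (m 0).toReal ≤ 2 * (A * ENNReal.ofReal r ^ d).toReal := by
    refine absorb_geometric (m := fun j => (m j).toReal) (q := q)
      (T := (μH[(d:ℝ)] (E ∩ closedBall y r)).toReal) hq1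
      (fun j => ENNReal.toReal_mono (hfin r le_rfl).ne
        (measure_mono (inter_subset_inter_right _ (closedBall_subset_closedBall (hle j)))))
      fun j => ?_
    have h1 := ENNReal.toReal_mono (by have := hmt (j + 1); finiteness) (hstep j)
    rwa [ENNReal.toReal_add (by finiteness) (by have := hmt (j + 1); finiteness),
      ENNReal.toReal_mul (b := m (j + 1)), ENNReal.toReal_mul (b := ENNReal.ofReal q ^ j),
      ENNReal.toReal_pow, ENNReal.toReal_ofReal (by positivity),
      ENNReal.toReal_ofReal (by positivity)] at h1
  have hm0 : m 0 = μH[(d:ℝ)] (E ∩ closedBall y (r / 2)) := by simp only [m, hstart]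
  rw [← hm0, mul_assoc]
  rw [← ENNReal.toReal_le_toReal (hmt 0) (by finiteness), ENNReal.toReal_mul]
  simpa using hreal

/-- The upper bound, by covering the ball with a bounded number of balls to which
`gaq_upper_half` applies. -/
lemma gaq_upper {n d : ℕ} (hdn : d ≤ n) (M : ℝ) :
    ∃ A : ℝ≥0∞, A ≠ ∞ ∧
      ∀ {δ₀ : ℝ≥0∞} {U : Set (Euc n)} {h : ℝ} {E : Set (Euc n)}, GAQ n d M δ₀ U h E →
      0 ≤ h → h ≤ 1 → ∀ (x : Euc n) {r : ℝ}, 0 < r → ENNReal.ofReal r < δ₀ →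
      ball x (2 * r) ⊆ U →
      μH[(d:ℝ)] (E ∩ ball x r) ≤ A * ENNReal.ofReal r ^ d := by
  rcases hdn.eq_or_lt with rfl | hdn
  · -- in top dimension the whole ball has measure at most a constant times `r ^ d`
    refine ⟨(d:ℝ≥0∞) ^ d * ENNReal.ofReal (2 * 1) ^ d, by finiteness, ?_⟩
    intro δ₀ U h E _ _ _ x r hr _ _
    have hsub : E ∩ ball x r ⊆ (fun z => x + r • z) ''
        {y : Euc d | (∀ i ∉ (Finset.univ : Finset (Fin d)), y i = (0 : Fin d → ℝ) i) ∧
          ‖y‖ ≤ 1} := by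
      rintro z ⟨-, hz⟩
      refine ⟨r⁻¹ • (z - x), ⟨by simp, ?_⟩, ?_⟩
      · rw [mem_ball, dist_eq_norm] at hz
        rw [norm_smul, norm_inv, Real.norm_of_nonneg hr.le, inv_mul_le_iff₀ hr]
        linarith
      · simp [smul_smul, hr.ne']
    refine (measure_mono hsub).trans ?_
    rw [hausdorffMeasure_scale hr, mul_comm]
    gcongr
    exact hausdorffMeasure_flat_le (by simp) _ zero_le_one
  obtain ⟨A, hA, hup⟩ := gaq_upper_half hdn M
  obtain ⟨F, hF1, hFf, hF⟩ := (isCompact_closedBall (0 : Euc n) 1).finite_cover_balls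
    (e := 1 / 8) (by norm_num)
  refine ⟨hFf.toFinset.card * A, by finiteness, ?_⟩
  intro δ₀ U h E hE hh hh1 x r hr hδ₀ hU
  have hsub : E ∩ ball x r ⊆ ⋃ z ∈ hFf.toFinset, E ∩ closedBall (x + r • z) (r / 4 / 2) := by
    rintro w ⟨hwE, hw⟩
    rw [mem_ball, dist_eq_norm] at hw
    have h1 : r⁻¹ • (w - x) ∈ closedBall (0 : Euc n) 1 := by
      rw [mem_closedBall_zero_iff, norm_smul, norm_inv, Real.norm_of_nonneg hr.le,
        inv_mul_le_iff₀ hr]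
      linarith
    obtain ⟨z, hz, hzw⟩ := mem_iUnion₂.1 (hF h1)
    refine mem_iUnion₂.2 ⟨z, by simpa using hz, hwE, ?_⟩
    rw [mem_ball, dist_eq_norm] at hzw
    have e : w - (x + r • z) = r • (r⁻¹ • (w - x) - z) := by
      rw [smul_sub, smul_smul, mul_inv_cancel₀ hr.ne', one_smul]; abel
    rw [mem_closedBall, dist_eq_norm, e, norm_smul, Real.norm_of_nonneg hr.le]
    nlinarith
  calc μH[(d:ℝ)] (E ∩ ball x r)
      ≤ ∑ z ∈ hFf.toFinset, μH[(d:ℝ)] (E ∩ closedBall (x + r • z) (r / 4 / 2)) :=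
        (measure_mono hsub).trans (measure_biUnion_finset_le _ _)
    _ ≤ ∑ z ∈ hFf.toFinset, A * ENNReal.ofReal r ^ d := by
        refine Finset.sum_le_sum fun z hz => ?_
        have hz1 : ‖z‖ ≤ 1 := by simpa using hF1 (hFf.mem_toFinset.1 hz)
        have hd : dist (x + r • z) x ≤ r := by
          rw [dist_eq_norm, add_sub_cancel_left, norm_smul, Real.norm_of_nonneg hr.le]
          nlinarith
        refine (hup hE hh hh1 (x + r • z) (r := r / 4) (by positivity)
          ((closedBall_subset_ball' (by linarith)).trans hU)
          (le_trans (ENNReal.ofReal_le_ofReal (by linarith)) hδ₀.le)).trans ?_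
        gcongr
        linarith
    _ = _ := by rw [Finset.sum_const, nsmul_eq_mul, mul_assoc]

/-- **Lemma 2.15** (local Ahlfors-regularity). For each `M ≥ 1` there are `h₀ > 0` and
`C ≥ 1`, depending only on `n`, `d`, `M`, such that if `E ∈ GAQ(M, δ₀, U, h)` with
`0 ≤ h ≤ h₀`, `x ∈ E*`, `0 < r < δ₀`, and `B(x,2r) ⊆ U`, then
`C⁻¹ r^d ≤ H^d(E ∩ B(x,r)) ≤ C r^d`. -/
theorem gaq_ahlfors_regularity (n d : ℕ) (M : ℝ) (hM : 1 ≤ M) :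
    ∃ h₀ C : ℝ, 0 < h₀ ∧ 1 ≤ C ∧
      ∀ U : Set (Euc n), IsOpen U → ∀ δ₀ : ℝ≥0∞, 0 < δ₀ →
      ∀ h : ℝ, 0 ≤ h → h ≤ h₀ →
      ∀ E : Set (Euc n), GAQ n d M δ₀ U h E →
      ∀ x : Euc n, x ∈ E → (∀ ρ : ℝ, 0 < ρ → 0 < μH[(d:ℝ)] (E ∩ ball x ρ)) →
      ∀ r : ℝ, 0 < r → ENNReal.ofReal r < δ₀ → ball x (2 * r) ⊆ U →
        ENNReal.ofReal (C⁻¹ * r ^ d) ≤ μH[(d:ℝ)] (E ∩ ball x r) ∧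
          μH[(d:ℝ)] (E ∩ ball x r) ≤ ENNReal.ofReal (C * r ^ d) := by
  rcases lt_or_ge n d with hnd | hdn
  · -- above the ambient dimension the measure vanishes, so there is no point `x` to consider
    refine ⟨1, 1, one_pos, le_rfl, ?_⟩
    intro U _ δ₀ _ h _ _ E _ x _ hx
    refine absurd (hx 1 one_pos) ?_
    rw [Real.hausdorffMeasure_of_finrank_lt (by simpa using hnd)]
    simp
  obtain ⟨A, hA, hup⟩ := gaq_upper hdn M
  obtain ⟨h₀, c, hh₀, hc, hlow⟩ : ∃ h₀ c : ℝ, 0 < h₀ ∧ 0 < c ∧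
      ∀ {δ₀ : ℝ≥0∞} {U : Set (Euc n)} {h : ℝ} {E : Set (Euc n)}, GAQ n d M δ₀ U h E →
      0 ≤ h → h ≤ h₀ → ∀ x ∈ E, (∀ ρ : ℝ, 0 < ρ → 0 < μH[(d:ℝ)] (E ∩ ball x ρ)) →
      ∀ r : ℝ, 0 < r → ENNReal.ofReal r < δ₀ → ball x (2 * r) ⊆ U →
        ENNReal.ofReal (c * r ^ d) ≤ μH[(d:ℝ)] (E ∩ ball x r) := by
    rcases Nat.eq_zero_or_pos d with rfl | hd
    · -- `μH[0]` is the counting measure, and `x` itself is a point of `E ∩ ball x r`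
      refine ⟨1, 1, one_pos, one_pos, ?_⟩
      intro δ₀ U h E _ _ _ x hx _ r hr _ _
      have := Measure.one_le_hausdorffMeasure_zero_of_nonempty (s := E ∩ ball x r)
        ⟨x, hx, mem_ball_self hr⟩
      simpa using this
    · obtain ⟨h₀, c, hh₀, hc, hlow⟩ := gaq_lower hd hdn M
      exact ⟨h₀, c, hh₀, hc, fun hE h0 h1 x _ => hlow hE h0 h1 x⟩
  refine ⟨min h₀ 1, max 1 (max c⁻¹ A.toReal), lt_min hh₀ one_pos, le_max_left _ _, ?_⟩
  intro U _ δ₀ _ h h0 h1 E hE x hx hpos r hr hrδ hU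
  set C : ℝ := max 1 (max c⁻¹ A.toReal) with hC
  constructor
  · refine le_trans (ENNReal.ofReal_le_ofReal ?_)
      (hlow hE h0 (h1.trans (min_le_left _ _)) x hx hpos r hr hrδ hU)
    gcongr
    exact inv_le_of_inv_le₀ hc ((le_max_left _ _).trans (le_max_right _ _))
  · refine (hup hE h0 (h1.trans (min_le_right _ _)) x hr hrδ hU).trans ?_
    rw [ENNReal.ofReal_mul (by positivity), ENNReal.ofReal_pow hr.le]
    gcongr
    exact ENNReal.le_ofReal_iff_toReal_le hA (by positivity) |>.2
      ((le_max_right _ _).trans (le_max_right _ _))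
end
end

section
/- Let d ≥ 1 be an integer and let C ⊆ ℝⁿ be a closed cone centered at the origin (i.e., λx ∈ C whenever x ∈ C and λ ≥ 0) such that H^d(C ∩ B(0,1)) < ∞. Then H^d(C ∩ ∂B(y,t)) = 0 for every y ∈ ℝⁿ and every t > 0, where ∂B(y,t) denotes the sphere of center y and radius t. -/
/-!
Let `E = (C ∩ ∂B(y,t)) \ {0}`. A ray from the origin meets the sphere `∂B(y,t)` in at most two
points, because `‖u • x - y‖² = t²` is a quadratic equation in `u` when `x ≠ 0`. Hence every point
lies in at most two of the dilates `a • E`, `a > 0` (`card_dilates_le_two`). For `a` in a suitable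
interval `(r/2, r)` the dilates all lie in `C ∩ B(0,1)` and have `H^d`-measure at least
`(r/2)^d H^d(E)`. Taking `N` of them and integrating the sum of their indicator functions
(`sum_measure_le_two_mul`) gives `N (r/2)^d H^d(E) ≤ 2 H^d(C ∩ B(0,1)) < ∞` for every `N`, so
`H^d(E) = 0`. The origin itself is `H^d`-null since `d ≥ 1`.
-/

open MeasureTheory Metric Set Filter Bornology
open scoped ENNReal NNReal Topology InnerProductSpace

noncomputable section

open scoped Pointwise

/-- Sets covering each point at most twice have total measure at most twice that of any measurable
set containing them. -/
lemma sum_measure_le_two_mul {X ι : Type*} [MeasurableSpace X] (μ : Measure X) (s : Finset ι)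
    (A : ι → Set X) (B : Set X) (hA : ∀ i ∈ s, MeasurableSet (A i)) (hB : MeasurableSet B)
    (hAB : ∀ i ∈ s, A i ⊆ B)
    (hmult : ∀ x, ∀ s' ⊆ s, (∀ i ∈ s', x ∈ A i) → s'.card ≤ 2) :
    ∑ i ∈ s, μ (A i) ≤ 2 * μ B := by
  classical
  have h1 : ∑ i ∈ s, μ (A i) = ∫⁻ x, ∑ i ∈ s, (A i).indicator 1 x ∂μ := by
    rw [lintegral_finsetSum s fun i hi => measurable_one.indicator (hA i hi)]
    exact Finset.sum_congr rfl fun i hi => (lintegral_indicator_one (hA i hi)).symm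
  have h2 : 2 * μ B = ∫⁻ x, B.indicator (fun _ => 2) x ∂μ := by
    rw [lintegral_indicator_const hB]
  rw [h1, h2]
  refine lintegral_mono fun x => ?_
  by_cases hx : x ∈ B
  · have h3 : ∑ i ∈ s, (A i).indicator (1 : X → ℝ≥0∞) x =
        ((s.filter fun i => x ∈ A i).card : ℝ≥0∞) := by
      simp [Set.indicator_apply]
    simp only [h3, Set.indicator_of_mem hx]
    exact_mod_cast hmult x _ (Finset.filter_subset _ _) fun i hi => (Finset.mem_filter.1 hi).2
  · simp only [Set.indicator_of_notMem hx]
    exact le_of_eq (Finset.sum_eq_zero fun i hi =>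
      Set.indicator_of_notMem (fun h => hx (hAB i hi h)) _)

/-- A line through the origin meets a sphere in at most two points, so a point belongs to at most
two dilates of a subset of a sphere that avoids the origin. -/
lemma card_dilates_le_two {V : Type*} [NormedAddCommGroup V] [InnerProductSpace ℝ V]
    (y : V) (t : ℝ) (E : Set V) (hE : E ⊆ sphere y t \ {0}) (x : V) (s : Finset ℝ)
    (hs : ∀ a ∈ s, 0 < a) (hx : ∀ a ∈ s, x ∈ a • E) : s.card ≤ 2 := by
  have key : ∀ a ∈ s, x ≠ 0 ∧
      ‖x‖ ^ 2 - 2 * a * ⟪x, y⟫_ℝ + a ^ 2 * (‖y‖ ^ 2 - t ^ 2) = 0 := by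
    intro a ha
    obtain ⟨e, he, rfl⟩ := hx a ha
    obtain ⟨h1, h2⟩ := hE he
    refine ⟨smul_ne_zero (hs a ha).ne' h2, ?_⟩
    rw [mem_sphere_iff_norm] at h1
    have h3 := norm_sub_sq_real e y
    rw [h1] at h3
    simp only [norm_smul, real_inner_smul_left, mul_pow, Real.norm_eq_abs, sq_abs]
    linear_combination (- a ^ 2) * h3
  by_contra! hcard
  obtain ⟨a, b, c, ha, hb, hc, hab, hac, hbc⟩ := Finset.two_lt_card_iff.1 hcard
  obtain ⟨hx0, ka⟩ := key a ha
  have kb := (key b hb).2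
  have kc := (key c hc).2
  -- Three distinct roots make the quadratic polynomial in the dilation factor vanish identically.
  have e1 : -2 * ⟪x, y⟫_ℝ + (a + b) * (‖y‖ ^ 2 - t ^ 2) = 0 :=
    mul_left_cancel₀ (sub_ne_zero.2 hab) (by linear_combination ka - kb)
  have e2 : -2 * ⟪x, y⟫_ℝ + (a + c) * (‖y‖ ^ 2 - t ^ 2) = 0 :=
    mul_left_cancel₀ (sub_ne_zero.2 hac) (by linear_combination ka - kc)
  have e3 : ‖y‖ ^ 2 - t ^ 2 = 0 :=
    mul_left_cancel₀ (sub_ne_zero.2 hbc) (by linear_combination e1 - e2)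
  have e4 : ‖x‖ ^ 2 = 0 := by
    linear_combination ka - a * e1 + a * b * e3
  exact hx0 (by simpa using e4)

/-- **Lemma 7.34.** If `C ⊆ ℝⁿ` is a closed cone centered at the origin with
`H^d(C ∩ B(0,1)) < ∞` (`d ≥ 1`), then `H^d(C ∩ ∂B(y,t)) = 0` for every sphere
`∂B(y,t)`. -/
theorem cone_sphere_null (n d : ℕ) (hd : 1 ≤ d) (C : Set (Euc n)) (hC : IsClosed C)
    (hcone : ∀ x ∈ C, ∀ l : ℝ, 0 ≤ l → l • x ∈ C)
    (hfin : μH[(d:ℝ)] (C ∩ ball (0 : Euc n) 1) < ⊤) :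
    ∀ (y : Euc n) (t : ℝ), 0 < t → μH[(d:ℝ)] (C ∩ sphere y t) = 0 := by
  intro y t ht
  have hd0 : (0 : ℝ) < d := by exact_mod_cast hd
  have := Measure.nullSingletonClass_hausdorff (Euc n) hd0
  set E : Set (Euc n) := (C ∩ sphere y t) \ {0} with hEdef
  have hEs : E ⊆ sphere y t \ {0} := fun x hx => ⟨hx.1.2, hx.2⟩
  have hEm : MeasurableSet E :=
    (hC.inter isClosed_sphere).measurableSet.diff (measurableSet_singleton 0)
  suffices h : μH[(d:ℝ)] E = 0 by
    rwa [hEdef, measure_sdiff_null (measure_singleton _)] at h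
  by_contra hne
  -- With this `r`, dilation by a factor below `r` maps `sphere y t` into the unit ball.
  set r : ℝ := 1 / (‖y‖ + t) with hr
  have hR : 0 < ‖y‖ + t := by positivity
  have hr0 : 0 < r := by positivity
  set c : ℝ≥0∞ := (((r / 2).toNNReal ^ (d : ℝ) : ℝ≥0) : ℝ≥0∞) with hcdef
  have hc0 : c ≠ 0 := by
    have : 0 < (r / 2).toNNReal := Real.toNNReal_pos.2 (by positivity)
    rw [hcdef, ENNReal.coe_ne_zero]
    exact (NNReal.rpow_pos this).ne'
  obtain ⟨N, hN⟩ := ENNReal.exists_nat_mul_gt (mul_ne_zero hc0 hne)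
    (ENNReal.mul_ne_top ENNReal.ofNat_ne_top hfin.ne : 2 * μH[(d:ℝ)] (C ∩ ball (0 : Euc n) 1) ≠ ⊤)
  obtain ⟨s, hs, hcard⟩ := (Ioo_infinite (half_lt_self hr0)).exists_subset_card_eq N
  have hpos : ∀ a ∈ s, 0 < a := fun a ha => (half_pos hr0).trans (hs ha).1
  refine hN.not_ge ?_
  calc (N : ℝ≥0∞) * (c * μH[(d:ℝ)] E) = ∑ a ∈ s, c * μH[(d:ℝ)] E := by simp [hcard]
    _ ≤ ∑ a ∈ s, μH[(d:ℝ)] (a • E) := by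
        refine Finset.sum_le_sum fun a ha => ?_
        rw [Measure.hausdorffMeasure_smul₀ hd0.le (hpos a ha).ne', ENNReal.smul_def, smul_eq_mul]
        gcongr
        rw [hcdef, ENNReal.coe_le_coe]
        refine NNReal.rpow_le_rpow ?_ hd0.le
        rw [Real.toNNReal_le_iff_le_coe, coe_nnnorm]
        exact (hs ha).1.le.trans (le_abs_self a)
    _ ≤ 2 * μH[(d:ℝ)] (C ∩ ball (0 : Euc n) 1) := by
        refine sum_measure_le_two_mul _ s _ _ (fun a ha => hEm.const_smul₀ a)
          (hC.measurableSet.inter measurableSet_ball) ?_ ?_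
        · rintro a ha _ ⟨e, he, rfl⟩
          refine ⟨hcone e he.1.1 a (hpos a ha).le, ?_⟩
          have h1 : ‖e - y‖ = t := mem_sphere_iff_norm.1 he.1.2
          have h2 : ‖e‖ ≤ ‖y‖ + t := by
            have := norm_le_norm_add_norm_sub y e
            rw [norm_sub_rev, h1] at this
            exact this
          rw [mem_ball_zero_iff, norm_smul, Real.norm_of_nonneg (hpos a ha).le]
          calc a * ‖e‖ ≤ a * (‖y‖ + t) := by have := hpos a ha; gcongr
            _ < r * (‖y‖ + t) := by have := (hs ha).2; gcongr
            _ = 1 := by rw [hr]; field_simp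
        · exact fun x s' hs' hx =>
            card_dilates_le_two y t E hEs x s' (fun a ha => hpos a (hs' ha)) hx
end
end
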